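/- arXiv:1710.07131 — 3 statements merged into one kernel-verified Lean document; each statement's English description precedes it below -/
import Mathlib

section
/- Let m ≥ 2, ρ ∈ (0,1), a_1,…,a_m ∈ ℝ and let p = (p_1,…,p_m) be a probability vector with every p_j > 0. Let μ_ρ be the homogeneous self-similar measure of the IFS {f_j(x) = ρx + a_j}_{j=1}^m, assume the IFS satisfies the strong separation condition, and let φ ∈ C²(ℝ) with φ''(t) > 0 for all t. Then for every strictly increasing sequence (s_n)_{n≥1} of positive integers, for μ_ρ-almost every x the sequence (s_n φ(x))_{n≥1} is equidistributed modulo 1; in particular, for μ_ρ-almost every x, φ(x) is normal in every integer base b ≥ 2. -/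
open MeasureTheory Real Filter

/-- A sequence `(x n)_{n ≥ 1}` of real numbers is equidistributed modulo 1: for every
subinterval `[a, b] ⊆ [0, 1]`, the proportion of indices `1 ≤ n ≤ N` whose fractional
part lies in `[a, b]` tends to `b - a`. -/
def EquidistributedMod1 (x : ℕ → ℝ) : Prop :=
  ∀ a b : ℝ, 0 ≤ a → a ≤ b → b ≤ 1 →
    Tendsto (fun N : ℕ =>
        (((Finset.Icc 1 N).filter fun n => Int.fract (x n) ∈ Set.Icc a b).card : ℝ) / N)
      atTop (nhds (b - a))

/-!
The measure `μ` is the law of `∑ ρ ^ k * X k` with i.i.d. digits `X k` of law `ν`. By the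
Davenport–Erdős–LeVeque argument it is enough that the Fourier transform of the law of `φ x` decays
like a power of the frequency. Splitting off the first `2 * N` digits, `x = w + ρ ^ (2 * N) * z`
with `w` and `z` independent, and linearizing `φ` at `w` when `|ξ| ≈ ρ ^ (-3 * N)` turns
`exp (i ξ φ(x))` into an average of the Fourier transform of `μ` at the frequencies
`ξ * ρ ^ (2 * N) * φ' w`. The Fourier transform of `μ` is a product over digits, and each factor is
bounded away from `1` in absolute value unless the frequency is close to a fixed lattice. As `φ'` is
strictly increasing, these random frequencies inherit the Frostman regularity of `μ`, so for most
`w` many factors are small, and the product is exponentially small in `N` on average.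
-/

open scoped ENNReal Topology

section SelfSimilar

/-- `μ` is homogeneous self-similar with contraction ratio `ρ` and digit law `ν`: it is the law of
`X + ρ * Y` for independent `X ∼ ν` and `Y ∼ μ`. The measure attached to the maps
`x ↦ ρ * x + a i` and the weights `p i` is the case `ν = ∑ i, p i • dirac (a i)`. -/
def IsHomogeneousSelfSimilar (ρ : ℝ) (ν μ : Measure ℝ) : Prop :=
  ν ∗ μ.map (ρ * ·) = μ

/-- The law of `∑ k < n, ρ ^ k * X k` for independent `X k ∼ ν`, which is the digit law of the
`n`-fold iterated function system. -/
noncomputable def iteratedDigitLaw (ρ : ℝ) (ν : Measure ℝ) : ℕ → Measure ℝ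
  | 0 => Measure.dirac 0
  | n + 1 => ν ∗ (iteratedDigitLaw ρ ν n).map (ρ * ·)

variable {ρ : ℝ} {ν μ : Measure ℝ}

lemma measure_singleton_mul_le_conv [SFinite μ] (x y : ℝ) : ν {x} * μ {y} ≤ (ν ∗ μ) {x + y} := by
  rw [Measure.conv, Measure.map_apply (by fun_prop) (measurableSet_singleton _),
    ← Measure.prod_prod]
  refine measure_mono ?_
  rintro ⟨u, v⟩ ⟨rfl, rfl⟩
  rfl

lemma IsHomogeneousSelfSimilar.of_eq_sum {ι : Type*} [Fintype ι] {a p : ι → ℝ} [SFinite μ]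
    (hμ : μ = ∑ i, ENNReal.ofReal (p i) • μ.map (fun x => ρ * x + a i)) :
    IsHomogeneousSelfSimilar ρ (∑ i, ENNReal.ofReal (p i) • Measure.dirac (a i)) μ := by
  refine Measure.ext_of_lintegral _ fun f hf => ?_
  rw [Measure.lintegral_conv (by fun_prop), lintegral_finsetSum_measure]
  conv_rhs => rw [hμ, lintegral_finsetSum_measure]
  refine Finset.sum_congr rfl fun i _ => ?_
  rw [lintegral_smul_measure, lintegral_smul_measure, lintegral_dirac' _ (by fun_prop),
    lintegral_map (by fun_prop) (by fun_prop), lintegral_map (by fun_prop) (by fun_prop)]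
  simp only [add_comm]

variable [IsProbabilityMeasure ν] [IsProbabilityMeasure μ]

instance (n : ℕ) : IsProbabilityMeasure (iteratedDigitLaw ρ ν n) := by
  induction n with
  | zero => exact Measure.dirac.isProbabilityMeasure
  | succ n ih =>
    have := Measure.isProbabilityMeasure_map (μ := iteratedDigitLaw ρ ν n)
      (measurable_const_mul ρ).aemeasurable
    exact Measure.probabilitymeasure_of_probabilitymeasures_conv _ _

lemma iteratedDigitLaw_singleton_ne_zero {a : ℝ} (ha : ν {a} ≠ 0) (n : ℕ) :
    iteratedDigitLaw ρ ν n {a * ∑ k ∈ Finset.range n, ρ ^ k} ≠ 0 := by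
  induction n with
  | zero => simp [iteratedDigitLaw]
  | succ n ih =>
    set S := ∑ k ∈ Finset.range n, ρ ^ k
    have hmap : iteratedDigitLaw ρ ν n {a * S} ≤
        (iteratedDigitLaw ρ ν n).map (ρ * ·) {ρ * (a * S)} := by
      rw [Measure.map_apply (by fun_prop) (measurableSet_singleton _)]
      exact measure_mono (by rintro _ rfl; rfl)
    have hsum : a * ∑ k ∈ Finset.range (n + 1), ρ ^ k = a + ρ * (a * S) := by
      rw [geom_sum_succ]; ring
    rw [hsum]
    exact ((mul_ne_zero ha (ih.bot_lt.trans_le hmap).ne').bot_lt.trans_le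
      (measure_singleton_mul_le_conv _ _)).ne'

namespace IsHomogeneousSelfSimilar

lemma iterate (h : IsHomogeneousSelfSimilar ρ ν μ) (n : ℕ) :
    IsHomogeneousSelfSimilar (ρ ^ n) (iteratedDigitLaw ρ ν n) μ := by
  induction n with
  | zero => simp [IsHomogeneousSelfSimilar, iteratedDigitLaw]
  | succ n ih =>
    have hpow : μ.map (ρ ^ (n + 1) * ·) = (μ.map (ρ ^ n * ·)).map (ρ * ·) := by
      rw [Measure.map_map (by fun_prop) (by fun_prop)]
      congr 1
      ext x
      simp only [Function.comp_apply]; ring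
    have hdistrib : (iteratedDigitLaw ρ ν n ∗ μ.map (ρ ^ n * ·)).map (ρ * ·) =
        (iteratedDigitLaw ρ ν n).map (ρ * ·) ∗ (μ.map (ρ ^ n * ·)).map (ρ * ·) :=
      Measure.map_conv_addMonoidHom (AddMonoidHom.mulLeft ρ) (measurable_const_mul ρ)
    rw [IsHomogeneousSelfSimilar, iteratedDigitLaw, hpow, Measure.conv_assoc, ← hdistrib, ih, h]

lemma map_prod (h : IsHomogeneousSelfSimilar ρ ν μ) :
    (ν.prod μ).map (fun z => z.1 + ρ * z.2) = μ := by
  have hprod : ν.prod (μ.map (ρ * ·)) = (ν.prod μ).map (Prod.map id (ρ * ·)) := by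
    rw [← Measure.map_prod_map _ _ measurable_id (by fun_prop), Measure.map_id]
  conv_rhs => rw [← h, Measure.conv, hprod, Measure.map_map (by fun_prop) (by fun_prop)]
  rfl

lemma measure_eq_lintegral (h : IsHomogeneousSelfSimilar ρ ν μ) {s : Set ℝ}
    (hs : MeasurableSet s) : μ s = ∫⁻ x, μ {y | x + ρ * y ∈ s} ∂ν := by
  conv_lhs => rw [← h.map_prod, Measure.map_apply (by fun_prop) hs,
    Measure.prod_apply (hs.preimage (by fun_prop))]
  rfl

lemma ae_ae (h : IsHomogeneousSelfSimilar ρ ν μ) {P : ℝ → Prop} (hP : ∀ᵐ w ∂μ, P w) :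
    ∀ᵐ x ∂ν, ∀ᵐ y ∂μ, P (x + ρ * y) := by
  rw [← h.map_prod] at hP
  exact Measure.ae_ae_of_ae_prod (ae_of_ae_map (by fun_prop) hP)

lemma integral_eq (h : IsHomogeneousSelfSimilar ρ ν μ) {E : Type*} [NormedAddCommGroup E]
    [NormedSpace ℝ E] {f : ℝ → E} (hf : Integrable f μ) :
    Integrable (fun x => ∫ y, f (x + ρ * y) ∂μ) ν ∧
      ∫ w, f w ∂μ = ∫ x, ∫ y, f (x + ρ * y) ∂μ ∂ν := by
  have hf' : Integrable f ((ν.prod μ).map (fun z => z.1 + ρ * z.2)) := by rwa [h.map_prod]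
  have hint := hf'.comp_measurable (by fun_prop : Measurable fun z : ℝ × ℝ => z.1 + ρ * z.2)
  refine ⟨hint.integral_prod_left, ?_⟩
  conv_lhs => rw [← h.map_prod, integral_map (by fun_prop) hf'.aestronglyMeasurable]
  exact integral_prod _ hint

lemma measure_abs_gt_le (h : IsHomogeneousSelfSimilar ρ ν μ) (hρ0 : 0 < ρ) (hρ1 : ρ < 1) {D : ℝ}
    (hν : ∀ᵐ x ∂ν, |x| ≤ D) (r : ℝ) :
    μ {x | D / (1 - ρ) + r < |x|} ≤ μ {x | D / (1 - ρ) + r / ρ < |x|} := by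
  set L := D / (1 - ρ) with hL
  have hDL : D = L - ρ * L := by rw [hL]; field_simp [(sub_pos.2 hρ1).ne']
  rw [h.measure_eq_lintegral (measurableSet_lt measurable_const (by fun_prop))]
  refine (lintegral_mono_ae (g := fun _ => μ {x | L + r / ρ < |x|}) ?_).trans_eq (by simp)
  filter_upwards [hν] with x hx
  refine measure_mono fun y (hy : L + r < |x + ρ * y|) => ?_
  have hxy : |x + ρ * y| ≤ |x| + ρ * |y| :=
    (abs_add_le _ _).trans_eq (by rw [abs_mul, abs_of_pos hρ0])
  have hr : ρ * (r / ρ) = r := mul_div_cancel₀ r hρ0.ne'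
  exact lt_of_mul_lt_mul_left (by linarith) hρ0.le

-- Tails beyond `L = D / (1 - ρ)` do not decrease when `r` is replaced by `r / ρ ^ n`, so they
-- vanish.
lemma ae_abs_le (h : IsHomogeneousSelfSimilar ρ ν μ) (hρ0 : 0 < ρ) (hρ1 : ρ < 1) {D : ℝ}
    (hν : ∀ᵐ x ∂ν, |x| ≤ D) : ∀ᵐ x ∂μ, |x| ≤ D / (1 - ρ) := by
  set L := D / (1 - ρ)
  have htail (r : ℝ) (n : ℕ) : μ {x | L + r < |x|} ≤ μ {x | L + r / ρ ^ n < |x|} := by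
    induction n with
    | zero => simp
    | succ n ih =>
      exact ih.trans ((h.measure_abs_gt_le hρ0 hρ1 hν _).trans_eq (by rw [pow_succ, div_div]))
  have hnull (r : ℝ) (hr : 0 < r) : μ {x | L + r < |x|} = 0 := by
    have hlim : Tendsto (fun n : ℕ => L + r / ρ ^ n) atTop atTop := by
      simp_rw [div_eq_mul_inv, ← inv_pow]
      exact tendsto_atTop_add_const_left _ _
        ((tendsto_pow_atTop_atTop_of_one_lt ((one_lt_inv₀ hρ0).2 hρ1)).const_mul_atTop hr)
    have htight :=
      tendsto_measure_norm_gt_of_isTightMeasureSet (isTightMeasureSet_singleton (μ := μ))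
    simp only [Set.mem_singleton_iff, iSup_iSup_eq_left] at htight
    exact le_antisymm (ge_of_tendsto' (htight.comp hlim) (htail r)) zero_le
  have hall : ∀ᵐ x ∂μ, ∀ k : ℕ, |x| ≤ L + 1 / ((k : ℝ) + 1) :=
    ae_all_iff.2 fun k => by
      simpa [ae_iff] using hnull (1 / ((k : ℝ) + 1)) (by positivity)
  filter_upwards [hall] with x hx
  simpa using ge_of_tendsto' (tendsto_one_div_add_atTop_nhds_zero_nat.const_add L) hx

end IsHomogeneousSelfSimilar
end SelfSimilar

section Frostman

/-- Intervals of length `O(ρ ^ n)` have measure `O(q ^ n)`, i.e. `lam` satisfies a Frostman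
condition with exponent `log q / log ρ`. -/
def HasFrostmanRate (ρ : ℝ) (q : ℝ≥0∞) (lam : Measure ℝ) : Prop :=
  ∀ T : ℝ, ∃ A : ℝ≥0∞, A ≠ ∞ ∧ ∀ (n : ℕ) (c l : ℝ), l ≤ T * ρ ^ n →
    lam (Set.Icc c (c + l)) ≤ A * q ^ n

variable {ρ L a b : ℝ} {ν μ : Measure ℝ}

lemma measure_affine_preimage_Icc_eq_zero_or (hρ0 : 0 < ρ) (hL : ∀ᵐ x ∂μ, |x| ≤ L) {c l : ℝ}
    (hl : l < b - a - 2 * L * ρ) :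
    μ {y | a + ρ * y ∈ Set.Icc c (c + l)} = 0 ∨ μ {y | b + ρ * y ∈ Set.Icc c (c + l)} = 0 := by
  by_contra! hne
  have hpoint (x : ℝ) (hx : μ {y | x + ρ * y ∈ Set.Icc c (c + l)} ≠ 0) :
      ∃ y, x + ρ * y ∈ Set.Icc c (c + l) ∧ |y| ≤ L := by
    by_contra! hcon
    exact hx (measure_mono_null (fun y hy => not_le.2 (hcon y hy)) (ae_iff.1 hL))
  obtain ⟨y, hy, hyL⟩ := hpoint a hne.1
  obtain ⟨z, hz, hzL⟩ := hpoint b hne.2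
  have hyz : ρ * (y - z) ≤ ρ * (2 * L) := by
    have := abs_le.1 hyL
    have := abs_le.1 hzL
    gcongr
    linarith
  linarith [hy.1, hz.2]

lemma one_sub_min_measure_singleton_lt_one (ha : ν {a} ≠ 0) (hb : ν {b} ≠ 0) :
    1 - min (ν {a}) (ν {b}) < 1 :=
  ENNReal.sub_lt_self ENNReal.one_ne_top one_ne_zero
    (lt_min ha.bot_lt hb.bot_lt).ne'

variable [IsProbabilityMeasure ν]

lemma exists_separated_atoms_iteratedDigitLaw (hρ0 : 0 < ρ) (hρ1 : ρ < 1) (ha : ν {a} ≠ 0)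
    (hb : ν {b} ≠ 0) (hab : a < b) (L : ℝ) :
    ∃ N : ℕ, N ≠ 0 ∧ ∃ a' b' : ℝ, iteratedDigitLaw ρ ν N {a'} ≠ 0 ∧
      iteratedDigitLaw ρ ν N {b'} ≠ 0 ∧ 2 * L * ρ ^ N < b' - a' := by
  have hlim : Tendsto (fun N : ℕ => 2 * L * ρ ^ N) atTop (𝓝 0) := by
    simpa using (tendsto_pow_atTop_nhds_zero_of_lt_one hρ0.le hρ1).const_mul (2 * L)
  obtain ⟨N, hNlt, hN⟩ :=
    ((hlim.eventually (gt_mem_nhds (sub_pos.2 hab))).and (eventually_ne_atTop 0)).exists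
  refine ⟨N, hN, _, _, iteratedDigitLaw_singleton_ne_zero ha N,
    iteratedDigitLaw_singleton_ne_zero hb N, hNlt.trans_le ?_⟩
  have hone : 1 ≤ ∑ k ∈ Finset.range N, ρ ^ k := by
    simpa using Finset.single_le_sum (f := fun k => ρ ^ k) (fun k _ => (pow_pos hρ0 k).le)
      (Finset.mem_range.2 hN.bot_lt)
  rw [← sub_mul]
  exact le_mul_of_one_le_right (sub_pos.2 hab).le hone

variable [IsProbabilityMeasure μ]

namespace IsHomogeneousSelfSimilar

lemma measure_Icc_le_mul (h : IsHomogeneousSelfSimilar ρ ν μ) (hρ0 : 0 < ρ)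
    (hL : ∀ᵐ x ∂μ, |x| ≤ L) {l : ℝ} (hl : l < b - a - 2 * L * ρ) {B : ℝ≥0∞}
    (hB : ∀ c, μ (Set.Icc c (c + l / ρ)) ≤ B) (c : ℝ) :
    μ (Set.Icc c (c + l)) ≤ (1 - min (ν {a}) (ν {b})) * B := by
  have hpre (x : ℝ) : μ {y | x + ρ * y ∈ Set.Icc c (c + l)} ≤ B := by
    refine (measure_mono ?_).trans (hB ((c - x) / ρ))
    rintro y ⟨hcy, hyc⟩
    rw [Set.mem_Icc, ← add_div, div_le_iff₀ hρ0, le_div_iff₀ hρ0]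
    constructor <;> linarith
  obtain ⟨x₀, hmin, hnull⟩ : ∃ x₀, min (ν {a}) (ν {b}) ≤ ν {x₀} ∧
      μ {y | x₀ + ρ * y ∈ Set.Icc c (c + l)} = 0 := by
    rcases measure_affine_preimage_Icc_eq_zero_or hρ0 hL hl (c := c) with h0 | h0
    exacts [⟨a, min_le_left _ _, h0⟩, ⟨b, min_le_right _ _, h0⟩]
  calc μ (Set.Icc c (c + l))
      = ∫⁻ x, μ {y | x + ρ * y ∈ Set.Icc c (c + l)} ∂ν := h.measure_eq_lintegral measurableSet_Icc
    _ ≤ ∫⁻ x, ({x₀}ᶜ : Set ℝ).indicator (fun _ => B) x ∂ν := by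
        refine lintegral_mono fun x => ?_
        by_cases hx : x = x₀
        · subst hx
          exact hnull.le.trans zero_le
        · simpa [hx] using hpre x
    _ = (1 - ν {x₀}) * B := by
        rw [lintegral_indicator_const (measurableSet_singleton _).compl, mul_comm,
          prob_compl_eq_one_sub (measurableSet_singleton _)]
    _ ≤ (1 - min (ν {a}) (ν {b})) * B := by gcongr

lemma measure_Icc_le_pow (h : IsHomogeneousSelfSimilar ρ ν μ) (hρ0 : 0 < ρ) (hρ1 : ρ < 1)
    (hL : ∀ᵐ x ∂μ, |x| ≤ L) (hab : 2 * L * ρ < b - a) (n : ℕ) :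
    ∀ (c : ℝ) {l : ℝ}, l < (b - a - 2 * L * ρ) * ρ ^ n →
      μ (Set.Icc c (c + l)) ≤ (1 - min (ν {a}) (ν {b})) ^ n := by
  induction n with
  | zero => simp [prob_le_one]
  | succ n ih =>
    intro c l hl
    rw [pow_succ, ← mul_assoc] at hl
    rw [pow_succ']
    refine h.measure_Icc_le_mul hρ0 hL (hl.trans_le ?_)
      (fun c' => ih c' ((div_lt_iff₀ hρ0).2 hl)) c
    rw [mul_assoc, ← pow_succ]
    exact mul_le_of_le_one_right (sub_pos.2 hab).le (pow_le_one₀ hρ0.le hρ1.le)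

lemma exists_hasFrostmanRate (h : IsHomogeneousSelfSimilar ρ ν μ) (hρ0 : 0 < ρ)
    (hρ1 : ρ < 1) (hL : ∀ᵐ x ∂μ, |x| ≤ L) (ha : ν {a} ≠ 0) (hb : ν {b} ≠ 0)
    (hab : 2 * L * ρ < b - a) :
    ∃ q < 1, HasFrostmanRate ρ q μ := by
  obtain ⟨q, hαq, hq1⟩ := exists_between (one_sub_min_measure_singleton_lt_one ha hb)
  have hq0 : q ≠ 0 := hαq.ne_bot
  refine ⟨q, hq1, fun T => ?_⟩
  have hlim : Tendsto (fun k : ℕ => T * ρ ^ k) atTop (𝓝 0) := by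
    simpa using (tendsto_pow_atTop_nhds_zero_of_lt_one hρ0.le hρ1).const_mul T
  obtain ⟨k, hk⟩ := (hlim.eventually (gt_mem_nhds (sub_pos.2 hab))).exists
  refine ⟨(q ^ k)⁻¹, ENNReal.inv_ne_top.2 (pow_ne_zero k hq0), fun n c l hl => ?_⟩
  rw [← ENNReal.div_eq_inv_mul, ENNReal.le_div_iff_mul_le (.inl (pow_ne_zero k hq0))
    (.inl (ENNReal.pow_ne_top hq1.ne_top))]
  rcases le_total k n with hkn | hnk
  · obtain ⟨j, rfl⟩ := Nat.exists_eq_add_of_le hkn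
    have hlj : l < (b - a - 2 * L * ρ) * ρ ^ j := by
      refine hl.trans_lt ?_
      rw [pow_add, ← mul_assoc]
      exact mul_lt_mul_of_pos_right hk (pow_pos hρ0 j)
    rw [pow_add, mul_comm]
    gcongr
    exact (h.measure_Icc_le_pow hρ0 hρ1 hL hab j c hlj).trans (by gcongr)
  · exact (mul_le_of_le_one_left' prob_le_one).trans (pow_le_pow_right_of_le_one' hq1.le hnk)

end IsHomogeneousSelfSimilar
end Frostman

section TwoAtoms

lemma norm_one_add_exp_le (t : ℝ) :
    ‖1 + Complex.exp ((2 * π * t : ℝ) * Complex.I)‖ ≤ 2 - 4 * (t - round t) ^ 2 := by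
  set s : ℝ := t - round t with hs
  have hperiod : Complex.exp ((2 * π * t : ℝ) * Complex.I) =
      Complex.exp ((π * s : ℝ) * Complex.I) * Complex.exp ((π * s : ℝ) * Complex.I) := by
    rw [← Complex.exp_add, Complex.exp_eq_exp_iff_exists_int]
    exact ⟨round t, by rw [hs]; push_cast; ring⟩
  have hfactor : 1 + Complex.exp ((2 * π * t : ℝ) * Complex.I) =
      2 * (cos (π * s) : ℂ) * Complex.exp ((π * s : ℝ) * Complex.I) := by
    rw [hperiod, Complex.ofReal_cos, Complex.two_cos, add_mul, ← Complex.exp_add _ _]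
    simp [← Complex.exp_add, add_comm]
  have habs : |π * s| ≤ π / 2 := by
    rw [abs_mul, abs_of_pos pi_pos]
    nlinarith [abs_sub_round t, pi_pos]
  have hcos : 0 ≤ cos (π * s) := cos_nonneg_of_mem_Icc (abs_le.1 habs)
  calc ‖1 + Complex.exp ((2 * π * t : ℝ) * Complex.I)‖ = 2 * cos (π * s) := by
        rw [hfactor, norm_mul, Complex.norm_exp_ofReal_mul_I, mul_one, norm_mul, Complex.norm_real,
          Complex.norm_ofNat, norm_of_nonneg hcos]
    _ ≤ 2 * (1 - 2 / π ^ 2 * (π * s) ^ 2) := by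
        gcongr
        exact cos_le_one_sub_mul_cos_sq (habs.trans (by linarith [pi_pos]))
    _ = 2 - 4 * s ^ 2 := by field_simp; ring

lemma norm_mul_add_mul_le {p q : ℝ} (hp : 0 ≤ p) (hq : 0 ≤ q) {z w : ℂ} (hz : ‖z‖ = 1)
    (hw : ‖w‖ = 1) : ‖(p : ℂ) * z + q * w‖ ≤ p + q - min p q * (2 - ‖z + w‖) := by
  wlog hpq : p ≤ q generalizing p q z w
  · rw [add_comm _ ((q : ℂ) * w), add_comm p, min_comm, add_comm z]
    exact this hq hp hw hz (le_of_not_ge hpq)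
  calc ‖(p : ℂ) * z + q * w‖ = ‖(p : ℂ) * (z + w) + ((q - p : ℝ) : ℂ) * w‖ := by
        push_cast; ring_nf
    _ ≤ p * ‖z + w‖ + (q - p) := by
        refine (norm_add_le _ _).trans_eq ?_
        rw [norm_mul, norm_mul, hw, mul_one, Complex.norm_of_nonneg hp,
          Complex.norm_of_nonneg (sub_nonneg.2 hpq)]
    _ = p + q - min p q * (2 - ‖z + w‖) := by rw [min_eq_left hpq]; ring

variable {ν : Measure ℝ} [IsProbabilityMeasure ν] {a b : ℝ}

lemma norm_charFun_le_of_atoms (hab : a ≠ b) (t : ℝ) :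
    ‖charFun ν (2 * π / (b - a) * t)‖ ≤
      1 - 4 * min (ν.real {a}) (ν.real {b}) * (t - round t) ^ 2 := by
  set u := 2 * π / (b - a) * t with hu
  set e : ℝ → ℂ := fun x => Complex.exp ((u * x : ℝ) * Complex.I) with he
  have hnorm (x : ℝ) : ‖e x‖ = 1 := Complex.norm_exp_ofReal_mul_I _
  have hint : Integrable e ν :=
    .of_bound (by fun_prop) 1 (ae_of_all _ fun x => (hnorm x).le)
  have hpair : ∫ x in {a, b}, e x ∂ν = ν.real {a} * e a + ν.real {b} * e b := by
    rw [Set.insert_eq, setIntegral_union (by simpa using hab) (measurableSet_singleton b)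
      hint.integrableOn hint.integrableOn, integral_singleton, integral_singleton]
    simp
  have hrest : ‖∫ x in {a, b}ᶜ, e x ∂ν‖ ≤ 1 - (ν.real {a} + ν.real {b}) := by
    refine (norm_setIntegral_le_of_norm_le_const (C := 1) (measure_lt_top _ _)
      fun x _ => (hnorm x).le).trans_eq ?_
    rw [one_mul, probReal_compl_eq_one_sub (by measurability), Set.insert_eq,
      measureReal_union (by simpa using hab) (measurableSet_singleton b)]
  have hsum : ‖e a + e b‖ ≤ 2 - 4 * (t - round t) ^ 2 := by
    have hfactor : e a + e b = e a * (1 + Complex.exp ((2 * π * t : ℝ) * Complex.I)) := by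
      have : (b : ℂ) - a ≠ 0 := sub_ne_zero.2 (by exact_mod_cast hab.symm)
      simp only [he, hu, mul_add, mul_one, ← Complex.exp_add]
      congr 2
      push_cast
      field_simp
      ring
    rw [hfactor, norm_mul, hnorm, one_mul]
    exact norm_one_add_exp_le t
  have hmin : 0 ≤ min (ν.real {a}) (ν.real {b}) := le_min measureReal_nonneg measureReal_nonneg
  have hchar : charFun ν u = ∫ x in {a, b}, e x ∂ν + ∫ x in {a, b}ᶜ, e x ∂ν := by
    rw [integral_add_compl (by measurability) hint, charFun_apply_real]
    simp [he]
  rw [hchar, hpair]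
  have := norm_mul_add_mul_le (p := ν.real {a}) (q := ν.real {b}) measureReal_nonneg
    measureReal_nonneg (hnorm a) (hnorm b)
  nlinarith [norm_add_le (ν.real {a} * e a + ν.real {b} * e b) (∫ x in {a, b}ᶜ, e x ∂ν)]

lemma exists_enorm_charFun_le_lt_one (ha : ν {a} ≠ 0) (hb : ν {b} ≠ 0) (hab : a ≠ b) {κ : ℝ}
    (hκ : 0 < κ) : ∃ r : ℝ≥0∞, r < 1 ∧
      ∀ t : ℝ, κ ≤ |t - round t| → ‖charFun ν (2 * π / (b - a) * t)‖ₑ ≤ r := by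
  set α := min (ν.real {a}) (ν.real {b})
  have hα : 0 < α := lt_min (ENNReal.toReal_pos ha (measure_ne_top ν _))
    (ENNReal.toReal_pos hb (measure_ne_top ν _))
  refine ⟨ENNReal.ofReal (1 - 4 * α * κ ^ 2), ?_, fun t ht => ?_⟩
  · rw [ENNReal.ofReal_lt_one, sub_lt_self_iff]
    positivity
  · rw [← ofReal_norm]
    refine ENNReal.ofReal_le_ofReal ((norm_charFun_le_of_atoms hab t).trans ?_)
    rw [← sq_abs (t - round t)]
    gcongr

end TwoAtoms

section NearIntegers

lemma exists_Icc_of_abs_sub_round_lt {κ θ l : ℝ} (hθ : 0 < θ) (hκ : κ ≤ 1 / 4) (hl : l * θ ≤ 1 / 2)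
    (c : ℝ) : ∃ d, ∀ y ∈ Set.Icc c (c + l),
      |θ * y - round (θ * y)| < κ → y ∈ Set.Icc d (d + 2 * κ / θ) := by
  by_cases hex : ∃ y ∈ Set.Icc c (c + l), |θ * y - round (θ * y)| < κ
  · obtain ⟨z, hz, hzκ⟩ := hex
    set n := round (θ * z)
    refine ⟨(n - κ) / θ, fun y hy hyκ => ?_⟩
    have hdist : |θ * (y - z)| ≤ 1 / 2 := by
      rw [abs_mul, abs_of_pos hθ]
      have : |y - z| ≤ l := by rw [abs_le]; constructor <;> linarith [hy.1, hy.2, hz.1, hz.2]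
      nlinarith
    have hround : round (θ * y) = n := by
      have : |((round (θ * y) - n : ℤ) : ℝ)| < 1 := by
        rw [abs_lt] at hzκ hyκ ⊢
        rw [abs_le] at hdist
        push_cast
        constructor <;> linarith [hzκ.1, hzκ.2, hyκ.1, hyκ.2, hdist.1, hdist.2]
      exact sub_eq_zero.1 (Int.abs_lt_one_iff.1 (by exact_mod_cast this))
    rw [hround, abs_lt] at hyκ
    rw [Set.mem_Icc, ← add_div, div_le_iff₀ hθ, le_div_iff₀ hθ]
    constructor <;> linarith [hyκ.1, hyκ.2]
  · exact ⟨0, fun y hy hyκ => (hex ⟨y, hy, hyκ⟩).elim⟩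

lemma setLIntegral_Icc_natCast_mul_le {lam : Measure ℝ} {G : ℝ → ℝ≥0∞} {l : ℝ} {M : ℝ≥0∞}
    (hM : ∀ c, ∫⁻ y in Set.Icc c (c + l), G y ∂lam ≤ M) {B : ℕ} (hB : B ≠ 0) (c : ℝ) :
    ∫⁻ y in Set.Icc c (c + B * l), G y ∂lam ≤ B * M := by
  induction B, Nat.one_le_iff_ne_zero.2 hB using Nat.le_induction with
  | base => simpa using hM c
  | succ B hB ih =>
    have hsub : Set.Icc c (c + (B + 1 : ℕ) * l) ⊆
        Set.Icc c (c + B * l) ∪ Set.Icc (c + B * l) (c + B * l + l) := by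
      rintro y ⟨hcy, hyc⟩
      push_cast at hyc
      rcases le_total y (c + B * l) with h | h
      exacts [.inl ⟨hcy, h⟩, .inr ⟨h, by linarith⟩]
    calc ∫⁻ y in Set.Icc c (c + (B + 1 : ℕ) * l), G y ∂lam
        ≤ ∫⁻ y in Set.Icc c (c + B * l), G y ∂lam +
            ∫⁻ y in Set.Icc (c + B * l) (c + B * l + l), G y ∂lam :=
          (lintegral_mono_set hsub).trans (lintegral_union_le _ _ _)
      _ ≤ B * M + M := add_le_add (ih (by omega)) (hM _)
      _ = (B + 1 : ℕ) * M := by push_cast; ring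

end NearIntegers

section ProductBound

variable {lam : Measure ℝ} {h : ℝ → ℝ≥0∞} {η : ℝ≥0∞} {ρ u : ℝ}

lemma setLIntegral_mul_le_of_near_integers {F : ℝ → ℝ≥0∞} {θ κ l : ℝ} (hF : Measurable F)
    (h1 : ∀ t, h t ≤ 1) (hη : ∀ t : ℝ, κ ≤ |t - round t| → h t ≤ η) (hθ : 0 < θ)
    (hκ : κ ≤ 1 / 4) (hl : l * θ ≤ 1 / 2) (c : ℝ) :
    ∃ d, ∫⁻ y in Set.Icc c (c + l), F y * h (θ * y) ∂lam ≤
      ∫⁻ y in Set.Icc d (d + 2 * κ / θ), F y ∂lam + η * ∫⁻ y in Set.Icc c (c + l), F y ∂lam := by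
  obtain ⟨d, hd⟩ := exists_Icc_of_abs_sub_round_lt hθ hκ hl c
  refine ⟨d, ?_⟩
  set J := Set.Icc d (d + 2 * κ / θ)
  calc ∫⁻ y in Set.Icc c (c + l), F y * h (θ * y) ∂lam
      ≤ ∫⁻ y in Set.Icc c (c + l), (J.indicator F y + η * F y) ∂lam := by
        refine setLIntegral_mono' measurableSet_Icc fun y hy => ?_
        by_cases hnear : |θ * y - round (θ * y)| < κ
        · rw [Set.indicator_of_mem (hd y hy hnear)]
          exact (mul_le_of_le_one_right' (h1 _)).trans le_self_add
        · rw [mul_comm]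
          exact (mul_le_mul_left (hη _ (not_lt.1 hnear)) _).trans le_add_self
    _ = ∫⁻ y in J ∩ Set.Icc c (c + l), F y ∂lam + η * ∫⁻ y in Set.Icc c (c + l), F y ∂lam := by
        rw [lintegral_add_left (hF.indicator measurableSet_Icc), lintegral_const_mul _ hF,
          setLIntegral_indicator measurableSet_Icc]
    _ ≤ ∫⁻ y in J, F y ∂lam + η * ∫⁻ y in Set.Icc c (c + l), F y ∂lam := by
        gcongr
        exact Set.inter_subset_left

-- At the finest scale `ρ ^ N * u * y` varies by at most `1 / 2`, so the last factor is close to `1`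
-- only on an interval short enough for the inductive hypothesis; elsewhere it gains `η`.
lemma setLIntegral_prod_le (hh : Measurable h) (h1 : ∀ t, h t ≤ 1)
    (hη : ∀ t : ℝ, ρ / 4 ≤ |t - round t| → h t ≤ η) (hρ0 : 0 < ρ) (hρ1 : ρ < 1) (hu : 0 < u)
    {B : ℕ} (hB : ρ⁻¹ ≤ B) {M : ℝ≥0∞}
    (hM : ∀ c l : ℝ, l * u ≤ ρ / 2 → lam (Set.Icc c (c + l)) ≤ M) (N : ℕ) :
    ∀ c l : ℝ, l * (u * ρ ^ N) ≤ ρ / 2 →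
      ∫⁻ y in Set.Icc c (c + l), ∏ k ∈ Finset.range N, h (ρ ^ k * u * y) ∂lam ≤
        (1 + η * B) ^ N * M := by
  induction N with
  | zero => simpa using hM
  | succ N ih =>
    intro c l hl
    set θ := u * ρ ^ N with hθ_def
    set F : ℝ → ℝ≥0∞ := fun y => ∏ k ∈ Finset.range N, h (ρ ^ k * u * y)
    have hF : Measurable F := by fun_prop
    have hθ : 0 < θ := by positivity
    have hρB : 1 ≤ ρ * B := by rwa [← div_le_iff₀' hρ0, one_div]
    have hB0 : (0 : ℝ) < B := (inv_pos.2 hρ0).trans_le hB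
    have hlθ : l * θ ≤ 1 / 2 := by
      rw [pow_succ, ← mul_assoc u, ← mul_assoc, ← hθ_def] at hl
      nlinarith
    obtain ⟨d, hd⟩ := setLIntegral_mul_le_of_near_integers (lam := lam) hF h1 hη hθ
      (by linarith) hlθ c
    have hnear : ∫⁻ y in Set.Icc d (d + 2 * (ρ / 4) / θ), F y ∂lam ≤ (1 + η * B) ^ N * M :=
      ih d _ (by field_simp; norm_num)
    have hcover : ∫⁻ y in Set.Icc c (c + l), F y ∂lam ≤ B * ((1 + η * B) ^ N * M) := by
      have hpiece : l / B * θ ≤ ρ / 2 := by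
        rw [div_mul_eq_mul_div, div_le_iff₀ hB0]
        linarith
      simpa [mul_div_cancel₀ l hB0.ne'] using
        setLIntegral_Icc_natCast_mul_le (fun c' => ih c' _ hpiece) (Nat.cast_pos.1 hB0).ne' c
    calc ∫⁻ y in Set.Icc c (c + l), ∏ k ∈ Finset.range (N + 1), h (ρ ^ k * u * y) ∂lam
        = ∫⁻ y in Set.Icc c (c + l), F y * h (θ * y) ∂lam := by
          simp only [Finset.prod_range_succ, hθ_def, mul_comm u, F]
      _ ≤ (1 + η * B) ^ N * M + η * (B * ((1 + η * B) ^ N * M)) := hd.trans (by gcongr)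
      _ = (1 + η * B) ^ (N + 1) * M := by ring

end ProductBound

section Moments

lemma exists_lintegral_le_mul_of_ae_abs_le {lam : Measure ℝ} {R l : ℝ} (hR : ∀ᵐ y ∂lam, |y| ≤ R)
    (hl : 0 < l) : ∃ Q : ℕ, ∀ (G : ℝ → ℝ≥0∞) (M : ℝ≥0∞),
      (∀ c, ∫⁻ y in Set.Icc c (c + l), G y ∂lam ≤ M) → ∫⁻ y, G y ∂lam ≤ Q * M := by
  obtain ⟨Q, hQ⟩ := exists_nat_ge (2 * R / l)
  refine ⟨Q + 1, fun G M hM => ?_⟩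
  have hcover : ∀ᵐ y ∂lam, y ∈ Set.Icc (-R) (-R + (Q + 1 : ℕ) * l) := by
    rw [div_le_iff₀ hl] at hQ
    filter_upwards [hR] with y hy
    rw [abs_le] at hy
    push_cast
    constructor <;> linarith [hy.1, hy.2]
  rw [← Measure.restrict_eq_self_of_ae_mem hcover]
  exact_mod_cast setLIntegral_Icc_natCast_mul_le hM Q.succ_ne_zero (-R)

variable {ρ : ℝ} {ν μ lam : Measure ℝ} [IsProbabilityMeasure ν]

lemma enorm_charFun_le_one (u : ℝ) : ‖charFun ν u‖ₑ ≤ 1 := by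
  rw [← ofReal_norm]
  exact ENNReal.ofReal_le_one.2 (norm_charFun_le_one u)

variable [IsProbabilityMeasure μ]

lemma IsHomogeneousSelfSimilar.enorm_charFun_le_prod (h : IsHomogeneousSelfSimilar ρ ν μ) (N : ℕ) :
    ∀ u : ℝ, ‖charFun μ u‖ₑ ≤ ∏ k ∈ Finset.range N, ‖charFun ν (ρ ^ k * u)‖ₑ := by
  induction N with
  | zero => exact fun u => by simpa using enorm_charFun_le_one u
  | succ N ih =>
    intro u
    have := Measure.isProbabilityMeasure_map (μ := μ) (measurable_const_mul ρ).aemeasurable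
    calc ‖charFun μ u‖ₑ = ‖charFun μ (ρ * u)‖ₑ * ‖charFun ν u‖ₑ := by
          conv_lhs => rw [← h, charFun_conv, charFun_map_mul, enorm_mul, mul_comm]
      _ ≤ _ := by
          rw [Finset.prod_range_succ', pow_zero, one_mul]
          gcongr
          simpa [pow_succ, mul_assoc] using ih (ρ * u)

lemma exists_pow_mul_lt_one {q r : ℝ≥0∞} (hq : q < 1) (hr : r < 1) (B : ℕ) :
    ∃ M : ℕ, M ≠ 0 ∧ (1 + r ^ M * B) * q < 1 := by
  have hlim : Tendsto (fun M : ℕ => (1 + r ^ M * B) * q) atTop (𝓝 ((1 + 0 * B) * q)) :=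
    ENNReal.Tendsto.mul_const (tendsto_const_nhds.add (ENNReal.Tendsto.mul_const
      (ENNReal.tendsto_pow_atTop_nhds_zero_of_lt_one hr) (.inr (ENNReal.natCast_ne_top B))))
      (.inr hq.ne_top)
  rw [zero_mul, add_zero, one_mul] at hlim
  obtain ⟨M, hM, hM0⟩ := ((hlim.eventually (gt_mem_nhds hq)).and (eventually_ne_atTop 0)).exists
  exact ⟨M, hM0, hM⟩

lemma IsHomogeneousSelfSimilar.exists_lintegral_pow_le (h : IsHomogeneousSelfSimilar ρ ν μ)
    (hρ0 : 0 < ρ) (hρ1 : ρ < 1) {a b : ℝ} (ha : ν {a} ≠ 0) (hb : ν {b} ≠ 0) (hab : a < b)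
    {q : ℝ≥0∞} (hq : q < 1) (hlam : HasFrostmanRate ρ q lam) {R : ℝ}
    (hR : ∀ᵐ y ∂lam, |y| ≤ R) (T : ℝ) :
    ∃ M : ℕ, M ≠ 0 ∧ ∃ C q' : ℝ≥0∞, C ≠ ∞ ∧ q' < 1 ∧ ∀ (u : ℝ) (N : ℕ),
      1 ≤ u * ρ ^ N → u * ρ ^ N ≤ T → ∫⁻ y, ‖charFun μ (u * y)‖ₑ ^ M ∂lam ≤ C * q' ^ N := by
  obtain ⟨r, hr, hνr⟩ := exists_enorm_charFun_le_lt_one ha hb hab.ne (by positivity : 0 < ρ / 4)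
  obtain ⟨B, hB⟩ := exists_nat_ge ρ⁻¹
  obtain ⟨M, hM0, hM⟩ := exists_pow_mul_lt_one hq hr B
  set D := (b - a) / (2 * π) with hD_def
  have hD : 0 < D := div_pos (sub_pos.2 hab) two_pi_pos
  obtain ⟨A, hA, hAlam⟩ := hlam (ρ / 2 / D)
  obtain ⟨Q, hQ⟩ := exists_lintegral_le_mul_of_ae_abs_le hR
    (by positivity : 0 < ρ / 2 / ((|T| + 1) * D))
  refine ⟨M, hM0, Q * A, (1 + r ^ M * B) * q, ENNReal.mul_ne_top (ENNReal.natCast_ne_top Q) hA, hM,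
    fun u N hu1 huT => ?_⟩
  have hρN := pow_pos hρ0 N
  have hu : 0 < u := pos_of_mul_pos_left (one_pos.trans_le hu1) hρN.le
  set g : ℝ → ℝ≥0∞ := fun t => ‖charFun ν (2 * π / (b - a) * t)‖ₑ ^ M
  have hpoint (y : ℝ) : ‖charFun μ (u * y)‖ₑ ^ M ≤
      ∏ k ∈ Finset.range N, g (ρ ^ k * (u * D) * y) := by
    rw [Finset.prod_pow]
    gcongr
    refine (h.enorm_charFun_le_prod N (u * y)).trans_eq (Finset.prod_congr rfl fun k _ => ?_)
    have := sub_pos.2 hab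
    congr 2
    rw [hD_def]
    field_simp
  have hmass (c l : ℝ) (hl : l * (u * D) ≤ ρ / 2) : lam (Set.Icc c (c + l)) ≤ A * q ^ N := by
    refine hAlam N c l ?_
    rw [div_mul_eq_mul_div, le_div_iff₀ hD]
    nlinarith [mul_le_mul_of_nonneg_right hl hρN.le]
  refine (lintegral_mono hpoint).trans
    ((hQ _ ((1 + r ^ M * B) ^ N * (A * q ^ N)) fun c => ?_).trans_eq (by rw [mul_pow]; ring))
  refine setLIntegral_prod_le (by fun_prop) (fun t => pow_le_one' (enorm_charFun_le_one _) M)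
    (fun t ht => pow_le_pow_left' (hνr t ht) M) hρ0 hρ1 (by positivity) hB hmass N c _ ?_
  have huT' : u * ρ ^ N / (|T| + 1) ≤ 1 :=
    div_le_one_of_le₀ (huT.trans (by linarith [le_abs_self T])) (by positivity)
  calc ρ / 2 / ((|T| + 1) * D) * (u * D * ρ ^ N) = ρ / 2 * (u * ρ ^ N / (|T| + 1)) := by field_simp
    _ ≤ ρ / 2 := mul_le_of_le_one_right (by positivity) huT'

lemma IsHomogeneousSelfSimilar.exists_lintegral_le (h : IsHomogeneousSelfSimilar ρ ν μ)
    [IsProbabilityMeasure lam] (hρ0 : 0 < ρ) (hρ1 : ρ < 1) {a b : ℝ} (ha : ν {a} ≠ 0)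
    (hb : ν {b} ≠ 0) (hab : a < b) {q : ℝ≥0∞} (hq : q < 1) (hlam : HasFrostmanRate ρ q lam) {R : ℝ}
    (hR : ∀ᵐ y ∂lam, |y| ≤ R) (T : ℝ) :
    ∃ C q' : ℝ≥0∞, C ≠ ∞ ∧ q' < 1 ∧ ∀ (u : ℝ) (N : ℕ),
      1 ≤ u * ρ ^ N → u * ρ ^ N ≤ T → ∫⁻ y, ‖charFun μ (u * y)‖ₑ ∂lam ≤ C * q' ^ N := by
  obtain ⟨M, hM0, C, q', hC, hq', hbound⟩ :=
    h.exists_lintegral_pow_le hρ0 hρ1 ha hb hab hq hlam hR T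
  have hMinv : 0 < (M : ℝ)⁻¹ := by positivity
  refine ⟨C ^ (M : ℝ)⁻¹, q' ^ (M : ℝ)⁻¹, ENNReal.rpow_ne_top_of_nonneg hMinv.le hC,
    ENNReal.rpow_lt_one hq' hMinv, fun u N hu1 huT => ?_⟩
  calc ∫⁻ y, ‖charFun μ (u * y)‖ₑ ∂lam
      = eLpNorm (fun y => charFun μ (u * y)) 1 lam := eLpNorm_one_eq_lintegral_enorm.symm
    _ ≤ eLpNorm (fun y => charFun μ (u * y)) M lam :=
        eLpNorm_le_eLpNorm_of_exponent_le (by exact_mod_cast Nat.one_le_iff_ne_zero.2 hM0)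
          (by fun_prop)
    _ = (∫⁻ y, ‖charFun μ (u * y)‖ₑ ^ M ∂lam) ^ (M : ℝ)⁻¹ := by
        rw [eLpNorm_eq_lintegral_rpow_enorm_toReal (by exact_mod_cast hM0)
          (ENNReal.natCast_ne_top M)]
        simp
    _ ≤ (C * q' ^ N) ^ (M : ℝ)⁻¹ := by gcongr; exact hbound u N hu1 huT
    _ = C ^ (M : ℝ)⁻¹ * (q' ^ (M : ℝ)⁻¹) ^ N := by
        rw [ENNReal.mul_rpow_of_nonneg _ _ hMinv.le, ← ENNReal.rpow_natCast, ← ENNReal.rpow_natCast,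
          ← ENNReal.rpow_mul, ← ENNReal.rpow_mul, mul_comm (N : ℝ)]

end Moments

section Linearization

lemma HasFrostmanRate.map {ρ : ℝ} {q : ℝ≥0∞} {μ : Measure ℝ} (hμ : HasFrostmanRate ρ q μ)
    {s : Set ℝ} (hs : ∀ᵐ x ∂μ, x ∈ s) {ψ : ℝ → ℝ} (hψ : Measurable ψ) {c₀ : ℝ} (hc₀ : 0 < c₀)
    (hexp : ∀ x ∈ s, ∀ y ∈ s, c₀ * |x - y| ≤ |ψ x - ψ y|) :
    HasFrostmanRate ρ q (μ.map ψ) := by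
  intro T
  obtain ⟨A, hA, hAμ⟩ := hμ (2 * T / c₀)
  refine ⟨A, hA, fun n c l hl => ?_⟩
  rw [Measure.map_apply hψ measurableSet_Icc]
  by_cases hne : ∃ x ∈ s, ψ x ∈ Set.Icc c (c + l)
  · obtain ⟨x, hxs, hx⟩ := hne
    have hsub : ∀ᵐ y ∂μ, y ∈ ψ ⁻¹' Set.Icc c (c + l) →
        y ∈ Set.Icc (x - l / c₀) (x - l / c₀ + 2 * l / c₀) := by
      filter_upwards [hs] with y hys hy
      have hψl : |ψ y - ψ x| ≤ l :=
        abs_sub_le_iff.2 ⟨by linarith [hx.1, hy.2], by linarith [hx.2, hy.1]⟩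
      have hyx : |y - x| ≤ l / c₀ := by
        rw [le_div_iff₀' hc₀]
        exact (hexp y hys x hxs).trans hψl
      rw [abs_le] at hyx
      constructor <;> linarith [hyx.1, hyx.2, (by ring : 2 * l / c₀ = 2 * (l / c₀))]
    refine (measure_mono_ae hsub).trans (hAμ n _ _ ?_)
    rw [div_mul_eq_mul_div]
    exact div_le_div_of_nonneg_right (by linarith) hc₀.le
  · refine (measure_mono_null (t := sᶜ) (fun y hy hys => hne ⟨y, hys, hy⟩) hs).trans_le zero_le

lemma abs_sub_sub_mul_le_of_lipschitzOnWith_deriv {φ : ℝ → ℝ} (hφ : Differentiable ℝ φ) {s : Set ℝ}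
    (hs : Convex ℝ s) {C : NNReal} (hC : LipschitzOnWith C (deriv φ) s) {x y : ℝ} (hx : x ∈ s)
    (hy : y ∈ s) : |φ x - φ y - deriv φ y * (x - y)| ≤ C * (x - y) ^ 2 := by
  have hderiv (t : ℝ) : HasDerivAt (fun t => φ t - deriv φ y * t) (deriv φ t - deriv φ y) t := by
    have h := (hφ t).hasDerivAt.sub ((hasDerivAt_id t).const_mul (deriv φ y))
    simp only [mul_one] at h
    exact h
  have hbound : ∀ t ∈ segment ℝ y x, ‖deriv φ t - deriv φ y‖ ≤ C * |x - y| := fun t ht =>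
    (hC.norm_sub_le (hs.segment_subset hy hx ht) hy).trans (by
      gcongr
      rw [segment_eq_uIcc] at ht
      exact Set.abs_sub_left_of_mem_uIcc ht)
  have := (convex_segment y x).norm_image_sub_le_of_norm_hasDerivWithin_le
    (fun t _ => (hderiv t).hasDerivWithinAt) hbound (left_mem_segment ℝ y x)
    (right_mem_segment ℝ y x)
  calc |φ x - φ y - deriv φ y * (x - y)| = |φ x - deriv φ y * x - (φ y - deriv φ y * y)| := by
        congr 1; ring
    _ ≤ C * |x - y| * |x - y| := this
    _ = C * (x - y) ^ 2 := by rw [mul_assoc, abs_mul_abs_self, sq]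

lemma exists_pos_mul_abs_sub_le_of_deriv_pos {ψ : ℝ → ℝ} (hψ : ContDiff ℝ 1 ψ)
    (hpos : ∀ t, 0 < deriv ψ t) (a b : ℝ) :
    ∃ c > 0, ∀ x ∈ Set.Icc a b, ∀ y ∈ Set.Icc a b, c * |x - y| ≤ |ψ x - ψ y| := by
  rcases (Set.Icc a b).eq_empty_or_nonempty with hemp | hne
  · exact ⟨1, one_pos, by simp [hemp]⟩
  obtain ⟨t₀, -, ht₀⟩ := isCompact_Icc.exists_isMinOn hne
    (hψ.continuous_deriv le_rfl).continuousOn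
  refine ⟨deriv ψ t₀, hpos t₀, fun x hx y hy => ?_⟩
  wlog hyx : y ≤ x generalizing x y
  · rw [abs_sub_comm x, abs_sub_comm (ψ x)]
    exact this y hy x hx (le_of_not_ge hyx)
  rw [abs_of_nonneg (sub_nonneg.2 hyx)]
  exact ((convex_Icc a b).mul_sub_le_image_sub_of_le_deriv hψ.continuous.continuousOn
    (hψ.differentiable one_ne_zero).differentiableOn
    (fun t ht => ht₀ (interior_subset ht)) y hy x hx hyx).trans (le_abs_self _)

lemma norm_exp_mul_I_sub_exp_mul_I_le (s t : ℝ) :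
    ‖Complex.exp (s * Complex.I) - Complex.exp (t * Complex.I)‖ ≤ |s - t| := by
  have : Complex.exp (s * Complex.I) - Complex.exp (t * Complex.I) =
      Complex.exp (t * Complex.I) * (Complex.exp (Complex.I * (s - t : ℝ)) - 1) := by
    rw [mul_sub, ← Complex.exp_add, mul_one]
    push_cast
    ring_nf
  rw [this, norm_mul, Complex.norm_exp_ofReal_mul_I, one_mul]
  exact norm_exp_I_mul_ofReal_sub_one_le

lemma norm_integral_exp_affine (μ : Measure ℝ) (a b : ℝ) :
    ‖∫ y, Complex.exp ((a + b * y : ℝ) * Complex.I) ∂μ‖ = ‖charFun μ b‖ := by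
  have (y : ℝ) : Complex.exp ((a + b * y : ℝ) * Complex.I) =
      Complex.exp (a * Complex.I) * Complex.exp (b * y * Complex.I) := by
    rw [← Complex.exp_add]
    push_cast
    ring_nf
  simp_rw [this]
  rw [integral_const_mul, norm_mul, Complex.norm_exp_ofReal_mul_I, one_mul, charFun_apply_real]

lemma norm_integral_exp_le_of_abs_sub_le {α : Type*} [MeasurableSpace α] {P : Measure α}
    [IsProbabilityMeasure P] {f g : α → ℝ} (hf : Measurable f) (hg : Measurable g) {ε : ℝ}
    (hfg : ∀ᵐ y ∂P, |f y - g y| ≤ ε) :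
    ‖∫ y, Complex.exp (f y * Complex.I) ∂P‖ ≤ ‖∫ y, Complex.exp (g y * Complex.I) ∂P‖ + ε := by
  have hint {f : α → ℝ} (hf : Measurable f) :
      Integrable (fun y => Complex.exp (f y * Complex.I)) P :=
    .of_bound (by fun_prop) 1 (ae_of_all _ fun y => (Complex.norm_exp_ofReal_mul_I _).le)
  have hdiff : ‖∫ y, (Complex.exp (f y * Complex.I) - Complex.exp (g y * Complex.I)) ∂P‖ ≤ ε := by
    simpa using norm_integral_le_of_norm_le_const
      (hfg.mono fun y hy => (norm_exp_mul_I_sub_exp_mul_I_le _ _).trans hy)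
  rw [integral_sub (hint hf) (hint hg)] at hdiff
  linarith [norm_sub_norm_le (∫ y, Complex.exp (f y * Complex.I) ∂P)
    (∫ y, Complex.exp (g y * Complex.I) ∂P)]

variable {ρ L C : ℝ} {ν μ : Measure ℝ} [IsProbabilityMeasure μ] {φ ψ : ℝ → ℝ}

lemma norm_integral_exp_comp_affine_le (hφ : Measurable φ) (hL : ∀ᵐ y ∂μ, |y| ≤ L)
    (hφψ : ∀ w z, |w| ≤ L → |z| ≤ L → |φ w - φ z - ψ z * (w - z)| ≤ C * (w - z) ^ 2)
    (hC : 0 ≤ C) (ξ : ℝ) {x z : ℝ} (hx : ∀ᵐ y ∂μ, |x + ρ * y| ≤ L) (hz : |z| ≤ L)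
    (hxz : |x + ρ * z| ≤ L) :
    ‖∫ y, Complex.exp ((ξ * φ (x + ρ * y) : ℝ) * Complex.I) ∂μ‖ ≤
      ‖charFun μ (ξ * ρ * ψ (x + ρ * z))‖ + |ξ| * (C * (2 * L * ρ) ^ 2) := by
  set w := x + ρ * z with hw
  rw [← norm_integral_exp_affine μ (ξ * (φ w - ψ w * (ρ * z)))]
  refine norm_integral_exp_le_of_abs_sub_le (by fun_prop) (by fun_prop) ?_
  filter_upwards [hL, hx] with y hy hxy
  have hyz : (y - z) ^ 2 ≤ (2 * L) ^ 2 := by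
    rw [abs_le] at hy hz
    exact sq_le_sq' (by linarith) (by linarith)
  have hxw : x + ρ * y - w = ρ * (y - z) := by rw [hw]; ring
  calc _ = |ξ| * |φ (x + ρ * y) - φ w - ψ w * (x + ρ * y - w)| := by
        rw [← abs_mul, hxw]
        ring_nf
    _ ≤ |ξ| * (C * (x + ρ * y - w) ^ 2) := by gcongr; exact hφψ _ _ hxy hxz
    _ = |ξ| * (C * ((y - z) ^ 2 * ρ ^ 2)) := by rw [hxw]; ring
    _ ≤ |ξ| * (C * (2 * L * ρ) ^ 2) := by rw [mul_pow _ ρ]; gcongr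

/- Both the outer digit `x` and the base point `z` of the linearization are random, so that
`x + ρ * z` again has law `μ`. -/
lemma IsHomogeneousSelfSimilar.norm_charFun_map_le [IsProbabilityMeasure ν]
    (h : IsHomogeneousSelfSimilar ρ ν μ) (hφ : Measurable φ) (hψ : Measurable ψ)
    (hL : ∀ᵐ y ∂μ, |y| ≤ L)
    (hφψ : ∀ w z, |w| ≤ L → |z| ≤ L → |φ w - φ z - ψ z * (w - z)| ≤ C * (w - z) ^ 2)
    (hC : 0 ≤ C) (ξ : ℝ) :
    ‖charFun (μ.map φ) ξ‖ ≤
      ∫ w, ‖charFun μ (ξ * ρ * ψ w)‖ ∂μ + |ξ| * (C * (2 * L * ρ) ^ 2) := by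
  set ε := |ξ| * (C * (2 * L * ρ) ^ 2)
  set G : ℝ → ℝ := fun w => ‖charFun μ (ξ * ρ * ψ w)‖
  have hG (x t : ℝ) : Integrable (fun z => G (x + t * z)) μ :=
    .of_bound (measurable_charFun.comp (by fun_prop)).norm.aestronglyMeasurable 1
      (ae_of_all _ fun z => by simpa [G] using norm_charFun_le_one _)
  have hE : Integrable (fun w => Complex.exp ((ξ * φ w : ℝ) * Complex.I)) μ :=
    .of_bound (by fun_prop) 1 (ae_of_all _ fun w => (Complex.norm_exp_ofReal_mul_I _).le)
  obtain ⟨hGν, hGμ⟩ := h.integral_eq (f := G) (by simpa using hG 0 1)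
  have hinner : ∀ᵐ x ∂ν, ‖∫ y, Complex.exp ((ξ * φ (x + ρ * y) : ℝ) * Complex.I) ∂μ‖ ≤
      ∫ z, G (x + ρ * z) ∂μ + ε := by
    filter_upwards [h.ae_ae hL] with x hx
    have hz : ∀ᵐ z ∂μ, ‖∫ y, Complex.exp ((ξ * φ (x + ρ * y) : ℝ) * Complex.I) ∂μ‖ ≤
        G (x + ρ * z) + ε := by
      filter_upwards [hL, hx] with z hz hxz
      exact norm_integral_exp_comp_affine_le hφ hL hφψ hC ξ hx hz hxz
    simpa [integral_add (hG x ρ) (integrable_const ε)] using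
      integral_mono_ae (integrable_const _) ((hG x ρ).add (integrable_const ε)) hz
  calc ‖charFun (μ.map φ) ξ‖ = ‖∫ w, Complex.exp ((ξ * φ w : ℝ) * Complex.I) ∂μ‖ := by
        rw [charFun_apply_real, integral_map hφ.aemeasurable (by fun_prop)]
        simp only [Complex.ofReal_mul]
    _ = ‖∫ x, ∫ y, Complex.exp ((ξ * φ (x + ρ * y) : ℝ) * Complex.I) ∂μ ∂ν‖ := by
        rw [(h.integral_eq hE).2]
    _ ≤ ∫ x, (∫ z, G (x + ρ * z) ∂μ + ε) ∂ν :=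
        norm_integral_le_of_norm_le (hGν.add (integrable_const ε)) hinner
    _ = ∫ w, G w ∂μ + ε := by rw [integral_add hGν (integrable_const ε), ← hGμ]; simp

end Linearization

section Decay

lemma exists_abs_sub_sub_deriv_mul_le {φ : ℝ → ℝ} (hφ : ContDiff ℝ 2 φ) (L : ℝ) :
    ∃ C ≥ 0, ∀ w z, |w| ≤ L → |z| ≤ L →
      |φ w - φ z - deriv φ z * (w - z)| ≤ C * (w - z) ^ 2 := by
  have hφ' : ContDiff ℝ 1 (deriv φ) := (contDiff_succ_iff_deriv.1 hφ).2.2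
  obtain ⟨C, hC⟩ := (hφ'.locallyLipschitz.locallyLipschitzOn
    (s := Set.Icc (-L) L)).exists_lipschitzOnWith_of_compact isCompact_Icc
  exact ⟨C, C.2, fun w z hw hz => abs_sub_sub_mul_le_of_lipschitzOnWith_deriv
    (hφ.differentiable two_ne_zero) (convex_Icc _ _) hC (abs_le.1 hw) (abs_le.1 hz)⟩

lemma exists_rpow_neg_of_forall_pow {F : ℝ → ℝ} {C r q : ℝ} (hr : 0 < r) (hrq : r < q)
    (hq : q < 1) (hC : 0 ≤ C)
    (hF : ∀ (ξ : ℝ) (N : ℕ), 1 ≤ ξ * r ^ N → ξ * r ^ N ≤ r⁻¹ → F ξ ≤ C * q ^ N) :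
    ∃ τ ∈ Set.Ioo (0 : ℝ) 1, ∀ ξ, 1 ≤ ξ → F ξ ≤ C * q⁻¹ * ξ ^ (-τ) := by
  have hq0 : 0 < q := hr.trans hrq
  have hlogr : log r < 0 := log_neg hr (hrq.trans hq)
  have hτ0 : 0 < log q / log r := div_pos_of_neg_of_neg (log_neg hq0 hq) hlogr
  have hrτ : r ^ (log q / log r) = q := by
    rw [rpow_def_of_pos hr, mul_div_cancel₀ _ hlogr.ne, exp_log hq0]
  refine ⟨log q / log r, ⟨hτ0, (div_lt_one_of_neg hlogr).2 (log_lt_log hr hrq)⟩, fun ξ hξ => ?_⟩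
  obtain ⟨N, hN, hN'⟩ := exists_nat_pow_near hξ ((one_lt_inv₀ hr).2 (hrq.trans hq))
  rw [inv_pow, inv_le_iff_one_le_mul₀ (pow_pos hr N)] at hN
  rw [inv_pow] at hN'
  have hpow : q ^ (N + 1) ≤ ξ ^ (-(log q / log r)) := by
    calc q ^ (N + 1) = ((r ^ (N + 1))⁻¹) ^ (-(log q / log r)) := by
          rw [rpow_neg (by positivity), inv_rpow (by positivity), inv_inv, ← rpow_natCast r,
            ← rpow_mul hr.le, mul_comm, rpow_mul hr.le, hrτ, rpow_natCast]
      _ ≤ ξ ^ (-(log q / log r)) :=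
          rpow_le_rpow_of_nonpos (by linarith) hN'.le (by linarith)
  have hNr : ξ * r ^ N ≤ r⁻¹ := by
    calc ξ * r ^ N ≤ (r ^ (N + 1))⁻¹ * r ^ N := by gcongr
      _ = r⁻¹ := by rw [pow_succ]; field_simp
  calc F ξ ≤ C * q ^ N := hF ξ N hN hNr
    _ = C * q⁻¹ * q ^ (N + 1) := by rw [pow_succ]; field_simp
    _ ≤ C * q⁻¹ * ξ ^ (-(log q / log r)) := by gcongr

namespace IsHomogeneousSelfSimilar

variable {ρ a b L : ℝ} {ν μ : Measure ℝ} [IsProbabilityMeasure ν] [IsProbabilityMeasure μ]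
  {φ : ℝ → ℝ}

lemma exists_integral_norm_charFun_deriv_le (h : IsHomogeneousSelfSimilar ρ ν μ) (hρ0 : 0 < ρ)
    (hρ1 : ρ < 1) (hL : ∀ᵐ x ∂μ, |x| ≤ L) (ha : ν {a} ≠ 0) (hb : ν {b} ≠ 0)
    (hLab : 2 * L * ρ < b - a) {ψ : ℝ → ℝ} (hψ : ContDiff ℝ 1 ψ) (hψ' : ∀ t, 0 < deriv ψ t)
    (T : ℝ) : ∃ C q : ℝ, 0 ≤ C ∧ 0 ≤ q ∧ q < 1 ∧ ∀ (u : ℝ) (N : ℕ), 1 ≤ u * ρ ^ N → u * ρ ^ N ≤ T →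
      ∫ x, ‖charFun μ (u * ψ x)‖ ∂μ ≤ C * q ^ N := by
  obtain ⟨x, hx⟩ := hL.exists
  have hab : a < b := by nlinarith [abs_nonneg x]
  have hψm : Measurable ψ := hψ.continuous.measurable
  have hLs : ∀ᵐ x ∂μ, x ∈ Set.Icc (-L) L := hL.mono fun x => abs_le.1
  have : IsProbabilityMeasure (μ.map ψ) := Measure.isProbabilityMeasure_map hψm.aemeasurable
  obtain ⟨q, hq, hμ⟩ := h.exists_hasFrostmanRate hρ0 hρ1 hL ha hb hLab
  obtain ⟨c, hc, hexp⟩ := exists_pos_mul_abs_sub_le_of_deriv_pos hψ hψ' (-L) L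
  obtain ⟨R, hR⟩ := isCompact_Icc.exists_bound_of_continuousOn
    (hψ.continuous.continuousOn (s := Set.Icc (-L) L))
  have hψR : ∀ᵐ y ∂μ.map ψ, |y| ≤ R :=
    (ae_map_iff hψm.aemeasurable (measurableSet_le (by fun_prop) measurable_const)).2 (hLs.mono hR)
  obtain ⟨C, q', hC, hq', hbound⟩ :=
    h.exists_lintegral_le hρ0 hρ1 ha hb hab hq (hμ.map hLs hψm hc hexp) hψR T
  refine ⟨C.toReal, q'.toReal, ENNReal.toReal_nonneg, ENNReal.toReal_nonneg,
    ENNReal.toReal_lt_of_lt_ofReal (by simpa using hq'), fun u N hu1 huT => ?_⟩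
  have hmeas : Measurable fun y => charFun μ (u * y) := measurable_charFun.comp (by fun_prop)
  rw [integral_norm_eq_lintegral_enorm (f := fun x => charFun μ (u * ψ x))
    (hmeas.comp hψm).aestronglyMeasurable, ← lintegral_map hmeas.enorm hψm,
    ← ENNReal.toReal_pow, ← ENNReal.toReal_mul]
  exact ENNReal.toReal_mono (ENNReal.mul_ne_top hC (ENNReal.pow_ne_top hq'.ne_top))
    (hbound u N hu1 huT)

/- Linearizing at scale `ρ ^ (2 * N)` when `|ξ| ≈ ρ ^ (-3 * N)` makes the quadratic error `O(ρ ^ N)`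
and leaves a frequency of order `ρ ^ (-N)` in the linear term. -/
lemma exists_norm_charFun_map_le_pow (h : IsHomogeneousSelfSimilar ρ ν μ) (hρ0 : 0 < ρ)
    (hρ1 : ρ < 1) (hL : ∀ᵐ x ∂μ, |x| ≤ L) (ha : ν {a} ≠ 0) (hb : ν {b} ≠ 0)
    (hLab : 2 * L * ρ < b - a) (hφ : ContDiff ℝ 2 φ) (hφ'' : ∀ t, 0 < deriv (deriv φ) t)
    (T : ℝ) : ∃ C q : ℝ, 0 ≤ C ∧ ρ ≤ q ∧ q < 1 ∧ ∀ (ξ : ℝ) (N : ℕ),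
      1 ≤ ξ * (ρ ^ 3) ^ N → ξ * (ρ ^ 3) ^ N ≤ T → ‖charFun (μ.map φ) ξ‖ ≤ C * q ^ N := by
  have hφ' : ContDiff ℝ 1 (deriv φ) := (contDiff_succ_iff_deriv.1 hφ).2.2
  obtain ⟨C₁, q, hC₁, hq0, hq, hlin⟩ :=
    h.exists_integral_norm_charFun_deriv_le hρ0 hρ1 hL ha hb hLab hφ' hφ'' T
  obtain ⟨C₂, hC₂, hquad⟩ := exists_abs_sub_sub_deriv_mul_le hφ L
  refine ⟨C₁ + 4 * C₂ * L ^ 2 * |T|, max q ρ, by positivity, le_max_right _ _, max_lt hq hρ1,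
    fun ξ N hξ hξT => ?_⟩
  have hξ0 : 0 < ξ := pos_of_mul_pos_left (one_pos.trans_le hξ) (by positivity)
  have hscale : ξ * (ρ ^ 3) ^ N = ξ * ρ ^ (2 * N) * ρ ^ N := by ring
  have hmain := hlin (ξ * ρ ^ (2 * N)) N (hscale ▸ hξ) (hscale ▸ hξT)
  have herr : |ξ| * (C₂ * (2 * L * ρ ^ (2 * N)) ^ 2) ≤ 4 * C₂ * L ^ 2 * |T| * (max q ρ) ^ N := by
    calc |ξ| * (C₂ * (2 * L * ρ ^ (2 * N)) ^ 2)
        = 4 * C₂ * L ^ 2 * (ξ * (ρ ^ 3) ^ N) * ρ ^ N := by rw [abs_of_pos hξ0]; ring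
      _ ≤ 4 * C₂ * L ^ 2 * |T| * (max q ρ) ^ N := by
          gcongr
          exacts [hξT.trans (le_abs_self T), le_max_right _ _]
  calc ‖charFun (μ.map φ) ξ‖
      ≤ ∫ w, ‖charFun μ (ξ * ρ ^ (2 * N) * deriv φ w)‖ ∂μ +
          |ξ| * (C₂ * (2 * L * ρ ^ (2 * N)) ^ 2) :=
        (h.iterate (2 * N)).norm_charFun_map_le hφ.continuous.measurable
          hφ'.continuous.measurable hL hquad hC₂ ξ
    _ ≤ C₁ * (max q ρ) ^ N + 4 * C₂ * L ^ 2 * |T| * (max q ρ) ^ N := by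
        refine add_le_add (hmain.trans ?_) herr
        gcongr
        exact le_max_left _ _
    _ = (C₁ + 4 * C₂ * L ^ 2 * |T|) * (max q ρ) ^ N := by ring

theorem exists_norm_charFun_map_le_rpow (h : IsHomogeneousSelfSimilar ρ ν μ) (hρ0 : 0 < ρ)
    (hρ1 : ρ < 1) {D : ℝ} (hD : ∀ᵐ x ∂ν, |x| ≤ D) (ha : ν {a} ≠ 0) (hb : ν {b} ≠ 0) (hab : a < b)
    (hφ : ContDiff ℝ 2 φ) (hφ'' : ∀ t, 0 < deriv (deriv φ) t) :
    ∃ C, ∃ τ ∈ Set.Ioo (0 : ℝ) 1, ∀ ξ, 1 ≤ |ξ| → ‖charFun (μ.map φ) ξ‖ ≤ C * |ξ| ^ (-τ) := by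
  obtain ⟨k, hk, a', b', ha', hb', hsep⟩ :=
    exists_separated_atoms_iteratedDigitLaw hρ0 hρ1 ha hb hab (D / (1 - ρ))
  have hr0 : 0 < ρ ^ k := pow_pos hρ0 k
  have hr1 : ρ ^ k < 1 := pow_lt_one₀ hρ0.le hρ1 hk
  obtain ⟨C, q, hC, hρq, hq, hpow⟩ := (h.iterate k).exists_norm_charFun_map_le_pow hr0 hr1
    (h.ae_abs_le hρ0 hρ1 hD) ha' hb' hsep hφ hφ'' ((ρ ^ k) ^ 3)⁻¹
  obtain ⟨τ, hτ, hdecay⟩ := exists_rpow_neg_of_forall_pow (pow_pos hr0 3)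
    ((pow_lt_self_of_lt_one₀ hr0 hr1 (by norm_num)).trans_le hρq) hq hC hpow
  refine ⟨C * q⁻¹, τ, hτ, fun ξ hξ => ?_⟩
  have heven : ‖charFun (μ.map φ) |ξ|‖ = ‖charFun (μ.map φ) ξ‖ := by
    rcases abs_choice ξ with h | h <;> simp [h, charFun_neg]
  exact heven ▸ hdecay |ξ| hξ

end IsHomogeneousSelfSimilar
end Decay

section EmpiricalMeasure

variable {ι X : Type*} [MeasurableSpace X] {s : Finset ι} {y : ι → X}

/-- The empirical measure of the points `y i`, `i ∈ s`, each counted with mass `1 / #s`. It is the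
zero measure when `s` is empty. -/
noncomputable def empiricalMeasure (s : Finset ι) (y : ι → X) : Measure X :=
  (s.card : ℝ≥0∞)⁻¹ • ∑ i ∈ s, Measure.dirac (y i)

lemma isProbabilityMeasure_empiricalMeasure (hs : s.Nonempty) :
    IsProbabilityMeasure (empiricalMeasure s y) := by
  constructor
  simpa [empiricalMeasure] using
    ENNReal.inv_mul_cancel (Nat.cast_ne_zero.2 hs.card_ne_zero) (ENNReal.natCast_ne_top _)

lemma empiricalMeasure_real_apply {E : Set X} (hE : MeasurableSet E)
    [DecidablePred fun i => y i ∈ E] :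
    (empiricalMeasure s y).real E = ((s.filter fun i => y i ∈ E).card : ℝ) / s.card := by
  simp [empiricalMeasure, measureReal_def, Measure.finsetSum_apply, Measure.dirac_apply' _ hE,
    Set.indicator_apply, div_eq_inv_mul]

lemma integral_empiricalMeasure {F : Type*} [NormedAddCommGroup F] [NormedSpace ℝ F]
    [CompleteSpace F] {f : X → F} (hf : StronglyMeasurable f) :
    ∫ x, f x ∂empiricalMeasure s y = (s.card : ℝ)⁻¹ • ∑ i ∈ s, f (y i) := by
  rw [empiricalMeasure, integral_smul_measure,
    integral_finsetSum_measure fun i _ => integrable_dirac' hf enorm_lt_top]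
  simp [integral_dirac' _ _ hf]

end EmpiricalMeasure

section Weyl

lemma mem_frontier_of_mem_frontier_preimage {X Y : Type*} [TopologicalSpace X]
    [TopologicalSpace Y] {f : X → Y} {x : X} {s : Set Y} (hf : ContinuousAt f x)
    (hx : x ∈ frontier (f ⁻¹' s)) : f x ∈ frontier s := by
  refine ⟨mem_closure_iff_nhds.2 fun U hU => ?_, fun hs => hx.2 ?_⟩
  · obtain ⟨y, hyU, hys⟩ := mem_closure_iff_nhds.1 hx.1 _ (hf hU)
    exact ⟨f y, hyU, hys⟩
  · exact mem_interior_iff_mem_nhds.2 (hf (mem_interior_iff_mem_nhds.1 hs))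

/-- The fractional part of a point of the circle `ℝ / ℤ`, that is, its representative in `[0, 1)`.
It turns a statement about fractional parts of real numbers into one about the circle. -/
noncomputable def circleFract (z : UnitAddCircle) : ℝ :=
  AddCircle.equivIco 1 0 z

lemma circleFract_coe (x : ℝ) : circleFract x = Int.fract x := by
  simp [circleFract, AddCircle.coe_equivIco_mk_apply]

lemma coe_circleFract (z : UnitAddCircle) : (circleFract z : UnitAddCircle) = z :=
  AddCircle.coe_equivIco

lemma measurable_circleFract : Measurable circleFract :=
  measurable_subtype_coe.comp (AddCircle.measurableEquivIco 1 0).measurable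

lemma continuousAt_circleFract {z : UnitAddCircle} (hz : z ≠ 0) : ContinuousAt circleFract z :=
  continuous_subtype_val.continuousAt.comp (AddCircle.continuousAt_equivIco 1 0 hz)

lemma map_circleFract_volume : volume.map circleFract = volume.restrict (Set.Ico 0 1) := by
  have hmk := (UnitAddCircle.measurePreserving_mk 0).map_eq
  rw [zero_add, ← Measure.restrict_congr_set Ico_ae_eq_Ioc] at hmk
  rw [← hmk, Measure.map_map measurable_circleFract AddCircle.measurable_mk']
  have hfract : circleFract ∘ QuotientAddGroup.mk =ᵐ[volume.restrict (Set.Ico 0 1)] id := by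
    filter_upwards [ae_restrict_mem measurableSet_Ico] with x hx
    exact (circleFract_coe x).trans (Int.fract_eq_self.2 hx)
  rw [Measure.map_congr hfract, Measure.map_id]

lemma volume_circleFract_preimage_Icc {a b : ℝ} (ha : 0 ≤ a) (hb : b ≤ 1) :
    volume (circleFract ⁻¹' Set.Icc a b) = ENNReal.ofReal (b - a) := by
  rw [← Measure.map_apply measurable_circleFract measurableSet_Icc, map_circleFract_volume,
    Measure.restrict_congr_set Ico_ae_eq_Icc, Measure.restrict_apply measurableSet_Icc,
    Set.inter_eq_left.2 (Set.Icc_subset_Icc ha hb), Real.volume_Icc]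

lemma volume_frontier_circleFract_preimage_Icc (a b : ℝ) :
    volume (frontier (circleFract ⁻¹' Set.Icc a b)) = 0 := by
  have hsub : frontier (circleFract ⁻¹' Set.Icc a b) ⊆
      {0, (a : UnitAddCircle), (b : UnitAddCircle)} := by
    intro z hz
    by_cases hz0 : z = 0
    · exact Or.inl hz0
    have hmem : circleFract z ∈ ({a, b} : Set ℝ) := by
      rcases le_or_gt a b with hab | hab
      · rw [← frontier_Icc hab]
        exact mem_frontier_of_mem_frontier_preimage (continuousAt_circleFract hz0) hz
      · simp [Set.Icc_eq_empty hab.not_ge] at hz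
    rw [← coe_circleFract z]
    rcases hmem with h | h
    · exact Or.inr (Or.inl (congrArg _ h))
    · exact Or.inr (Or.inr (congrArg _ h))
  have : NullSingletonClass (volume : Measure UnitAddCircle) :=
    ⟨fun z => by simpa using AddCircle.volume_closedBall (T := 1) (x := z) 0⟩
  exact measure_mono_null hsub ((Set.toFinite _).measure_zero _)

open BoundedContinuousFunction in
theorem tendsto_haarAddCircle_of_tendsto_integral_fourier {T : ℝ} [Fact (0 < T)] {ι : Type*}
    {l : Filter ι} {P : ι → ProbabilityMeasure (AddCircle T)}
    (h : ∀ k : ℤ, k ≠ 0 →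
      Tendsto (fun i => ∫ z, fourier k z ∂(P i : Measure (AddCircle T))) l (𝓝 0)) :
    Tendsto P l (𝓝 ⟨AddCircle.haarAddCircle, inferInstance⟩) := by
  have hfourier : ∀ k : ℤ, Tendsto (fun i => ∫ z, fourier k z ∂(P i : Measure (AddCircle T))) l
      (𝓝 (∫ z, fourier k z ∂(AddCircle.haarAddCircle : Measure (AddCircle T)))) := by
    intro k
    rcases eq_or_ne k 0 with rfl | hk
    · simpa using tendsto_const_nhds
    · rw [integral_eq_zero_of_add_right_eq_neg (fourier_add_half_inv_index hk Fact.out)]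
      exact h k hk
  have hspan : ∀ g ∈ Submodule.span ℂ (Set.range (fourier (T := T))),
      Tendsto (fun i => ∫ z, g z ∂(P i : Measure (AddCircle T))) l
        (𝓝 (∫ z, g z ∂(AddCircle.haarAddCircle : Measure (AddCircle T)))) := by
    have hint : ∀ (f : C(AddCircle T, ℂ)) (μ : Measure (AddCircle T)) [IsFiniteMeasure μ],
        Integrable f μ := fun f μ _ => (mkOfCompact f).integrable μ
    intro g hg
    induction hg using Submodule.span_induction with
    | mem f hf => obtain ⟨k, rfl⟩ := hf; exact hfourier k
    | zero => simpa using tendsto_const_nhds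
    | add f g _ _ hf hg =>
      simpa [integral_add (hint f _) (hint g _)] using hf.add hg
    | smul c f _ hf => simpa [integral_const_mul] using hf.const_mul c
  refine ProbabilityMeasure.tendsto_of_tight_of_separatesPoints ℂ
    (A := fourierSubalgebra.comap (toContinuousMapStarₐ ℂ)) IsTightMeasureSet.of_compactSpace
    ?_ fun g hg => hspan g.toContinuousMap ?_
  · intro x y hxy
    obtain ⟨_, ⟨f, hf, rfl⟩, hne⟩ := fourierSubalgebra_separatesPoints hxy
    exact ⟨f, ⟨f, ⟨mkOfCompact f, hf, rfl⟩, rfl⟩, hne⟩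
  · rw [← fourierSubalgebra_coe]
    exact hg

theorem equidistributedMod1_of_tendsto_fourier {x : ℕ → ℝ}
    (h : ∀ k : ℤ, k ≠ 0 → Tendsto
      (fun N : ℕ => (N : ℝ)⁻¹ • ∑ n ∈ Finset.Icc 1 N, fourier k (x n : UnitAddCircle))
      atTop (𝓝 0)) :
    EquidistributedMod1 x := by
  classical
  intro a b ha hab hb
  rw [← tendsto_add_atTop_iff_nat 1]
  let P : ℕ → ProbabilityMeasure UnitAddCircle := fun N =>
    ⟨empiricalMeasure (Finset.Icc 1 (N + 1)) fun n => (x n : UnitAddCircle),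
      isProbabilityMeasure_empiricalMeasure ⟨1, by simp⟩⟩
  have hP : Tendsto P atTop (𝓝 ⟨AddCircle.haarAddCircle, inferInstance⟩) := by
    refine tendsto_haarAddCircle_of_tendsto_integral_fourier fun k hk => ?_
    refine ((tendsto_add_atTop_iff_nat 1).2 (h k hk)).congr fun N => ?_
    refine Eq.trans ?_ (integral_empiricalMeasure (fourier k).continuous.stronglyMeasurable).symm
    rw [Nat.card_Icc, Nat.add_sub_cancel]
  have hhaar : (AddCircle.haarAddCircle : Measure UnitAddCircle) = volume := by
    simp [AddCircle.volume_eq_smul_haarAddCircle]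
  have hlim := ProbabilityMeasure.tendsto_measure_of_null_frontier_of_tendsto' hP
    (E := circleFract ⁻¹' Set.Icc a b)
    (by simpa [hhaar] using volume_frontier_circleFract_preimage_Icc a b)
  simp only [ProbabilityMeasure.coe_mk, hhaar, volume_circleFract_preimage_Icc ha hb] at hlim
  have hreal := (ENNReal.tendsto_toReal ENNReal.ofReal_ne_top).comp hlim
  rw [ENNReal.toReal_ofReal (sub_nonneg.2 hab)] at hreal
  refine hreal.congr fun N => ?_
  refine (empiricalMeasure_real_apply (measurable_circleFract measurableSet_Icc)).trans ?_
  simp [circleFract_coe]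

end Weyl

section Averages

variable {Ω E : Type*} [MeasurableSpace Ω] {μ : Measure Ω} [NormedAddCommGroup E]

lemma sum_range_rpow_neg_le {τ : ℝ} (hτ0 : 0 ≤ τ) (hτ1 : τ < 1) (N : ℕ) :
    ∑ d ∈ Finset.range N, (1 + d : ℝ) ^ (-τ) ≤ (N : ℝ) ^ (1 - τ) / (1 - τ) := by
  have hτ : 0 < 1 - τ := sub_pos.2 hτ1
  rw [le_div_iff₀ hτ]
  induction N with
  | zero => simpa using (zero_rpow_nonneg (1 - τ))
  | succ N ih =>
    have hN : (0 : ℝ) < 1 + N := by positivity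
    -- Bernoulli's inequality bounds `(N / (N + 1)) ^ (1 - τ)`.
    have hbern := rpow_one_add_le_one_add_mul_self (s := -1 / (1 + N : ℝ)) (p := 1 - τ)
      (by rw [le_div_iff₀ hN]; linarith [(Nat.cast_nonneg N : (0 : ℝ) ≤ N)]) hτ.le (by linarith)
    have hratio : 1 + -1 / (1 + N : ℝ) = N / (1 + N) := by field_simp; ring
    have hpow : (1 + N : ℝ) ^ (1 - τ) = (1 + N : ℝ) ^ (-τ) * (1 + N) := by
      rw [sub_eq_neg_add, rpow_add_one hN.ne']
    have hsplit : (1 + (1 - τ) * (-1 / (1 + N : ℝ))) * (1 + N : ℝ) ^ (1 - τ)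
        = (1 + N : ℝ) ^ (1 - τ) - (1 - τ) * (1 + N : ℝ) ^ (-τ) := by
      rw [hpow]; field_simp; ring
    rw [hratio, div_rpow N.cast_nonneg hN.le, div_le_iff₀ (rpow_pos_of_pos hN _), hsplit] at hbern
    rw [Finset.sum_range_succ, Nat.cast_succ, add_comm (N : ℝ) 1]
    linarith

lemma sum_dist_le_two_mul_sum_range {g : ℕ → ℝ} (hg : ∀ d, 0 ≤ g d) (N n : ℕ)
    (hn : n ∈ Finset.Icc 1 N) :
    ∑ m ∈ Finset.Icc 1 N, g (Nat.dist m n) ≤ 2 * ∑ d ∈ Finset.range N, g d := by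
  have hmaps : ∀ m ∈ Finset.Icc 1 N, Nat.dist m n ∈ Finset.range N := by
    intro m hm
    simp only [Finset.mem_Icc, Finset.mem_range, Nat.dist] at *
    omega
  rw [← Finset.sum_fiberwise_of_maps_to hmaps, Finset.mul_sum]
  refine Finset.sum_le_sum fun d _ => ?_
  have hcard : ((Finset.Icc 1 N).filter fun m => Nat.dist m n = d).card ≤ 2 := by
    refine (Finset.card_le_card (t := {n - d, n + d}) fun m hm => ?_).trans Finset.card_le_two
    have hm' := (Finset.mem_filter.1 hm).2
    simp only [Nat.dist, Finset.mem_insert, Finset.mem_singleton] at *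
    omega
  calc ∑ m ∈ Finset.Icc 1 N with Nat.dist m n = d, g (Nat.dist m n)
      = ∑ m ∈ Finset.Icc 1 N with Nat.dist m n = d, g d :=
        Finset.sum_congr rfl fun m hm => by rw [(Finset.mem_filter.1 hm).2]
    _ ≤ 2 * g d := by
        rw [Finset.sum_const, nsmul_eq_mul]
        exact mul_le_mul_of_nonneg_right (by exact_mod_cast hcard) (hg d)

lemma integral_norm_sum_sq_le [InnerProductSpace ℝ E] {f : ℕ → Ω → E} {N : ℕ} {g : ℕ → ℝ}
    (hf : ∀ m n, Integrable (fun x => inner ℝ (f m x) (f n x)) μ) (hg : ∀ d, 0 ≤ g d)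
    (hfg : ∀ m n, ∫ x, inner ℝ (f m x) (f n x) ∂μ ≤ g (Nat.dist m n)) :
    ∫ x, ‖∑ n ∈ Finset.Icc 1 N, f n x‖ ^ 2 ∂μ ≤ N * (2 * ∑ d ∈ Finset.range N, g d) := by
  calc ∫ x, ‖∑ n ∈ Finset.Icc 1 N, f n x‖ ^ 2 ∂μ
      = ∑ n ∈ Finset.Icc 1 N, ∑ m ∈ Finset.Icc 1 N, ∫ x, inner ℝ (f m x) (f n x) ∂μ := by
        simp_rw [← real_inner_self_eq_norm_sq, inner_sum, sum_inner]
        rw [integral_finsetSum _ fun n _ => integrable_finsetSum _ fun m _ => hf m n]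
        exact Finset.sum_congr rfl fun n _ => integral_finsetSum _ fun m _ => hf m n
    _ ≤ ∑ n ∈ Finset.Icc 1 N, 2 * ∑ d ∈ Finset.range N, g d :=
        Finset.sum_le_sum fun n hn => (Finset.sum_le_sum fun m _ => hfg m n).trans
          (sum_dist_le_two_mul_sum_range hg N n hn)
    _ = _ := by simp

lemma norm_sum_Icc_le_add {u : ℕ → E} (hu : ∀ n, ‖u n‖ ≤ 1) {M N : ℕ} (hMN : M ≤ N) :
    ‖∑ n ∈ Finset.Icc 1 N, u n‖ ≤ ‖∑ n ∈ Finset.Icc 1 M, u n‖ + (N - M) := by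
  induction N, hMN using Nat.le_induction with
  | base => simp
  | succ N _ ih =>
    rw [Finset.sum_Icc_succ_top (Nat.le_add_left 1 N), Nat.cast_succ]
    linarith [norm_add_le (∑ n ∈ Finset.Icc 1 N, u n) (u (N + 1)), hu (N + 1)]

lemma tendsto_average_of_tendsto_average_pow [NormedSpace ℝ E] {u : ℕ → E}
    (hu : ∀ n, ‖u n‖ ≤ 1) {A : ℕ} (hA : A ≠ 0)
    (h : Tendsto (fun k : ℕ => ((k ^ A : ℕ) : ℝ)⁻¹ • ∑ n ∈ Finset.Icc 1 (k ^ A), u n) atTop (𝓝 0)) :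
    Tendsto (fun N : ℕ => (N : ℝ)⁻¹ • ∑ n ∈ Finset.Icc 1 N, u n) atTop (𝓝 0) := by
  have hgap : Tendsto (fun k : ℕ => (1 + (k : ℝ)⁻¹) ^ A - 1) atTop (𝓝 0) := by
    simpa using ((tendsto_inv_atTop_nhds_zero_nat (𝕜 := ℝ)).const_add 1).pow A |>.sub_const 1
  have hroot : Tendsto (fun N => Nat.nthRoot A N) atTop atTop :=
    tendsto_atTop.2 fun b => (eventually_ge_atTop (b ^ A)).mono fun N hN =>
      (Nat.le_nthRoot_iff hA).2 hN
  have hbound := (h.norm.add hgap).comp hroot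
  rw [norm_zero, add_zero] at hbound
  refine squeeze_zero_norm' ?_ hbound
  filter_upwards [eventually_ge_atTop 1] with N hN
  set k := Nat.nthRoot A N
  have hk1 : 1 ≤ k := (Nat.le_nthRoot_iff hA).2 (by simpa using hN)
  have hkN : k ^ A ≤ N := (Nat.le_nthRoot_iff hA).1 le_rfl
  have hNk : (N : ℝ) ≤ ((k : ℝ) + 1) ^ A := by
    exact_mod_cast (Nat.lt_pow_nthRoot_add_one hA N).le
  have hk0 : (0 : ℝ) < k := by exact_mod_cast hk1
  have hratio : ((k : ℝ) ^ A)⁻¹ * ((k + 1) ^ A - k ^ A) = (1 + (k : ℝ)⁻¹) ^ A - 1 := by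
    rw [mul_sub, inv_mul_cancel₀ (by positivity), ← inv_pow, ← mul_pow, mul_add,
      inv_mul_cancel₀ hk0.ne', mul_one]
  calc ‖(N : ℝ)⁻¹ • ∑ n ∈ Finset.Icc 1 N, u n‖
      = (N : ℝ)⁻¹ * ‖∑ n ∈ Finset.Icc 1 N, u n‖ := by
        rw [norm_smul, norm_inv, RCLike.norm_natCast]
    _ ≤ ((k : ℝ) ^ A)⁻¹ * (‖∑ n ∈ Finset.Icc 1 (k ^ A), u n‖ + ((k + 1) ^ A - k ^ A)) := by
        refine mul_le_mul (inv_anti₀ (by positivity) (by exact_mod_cast hkN))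
          ((norm_sum_Icc_le_add hu hkN).trans ?_) (norm_nonneg _) (by positivity)
        push_cast
        linarith
    _ = _ := by
        simp only [Function.comp_apply]
        rw [mul_add, hratio, norm_smul, norm_inv, RCLike.norm_natCast, Nat.cast_pow]

lemma ae_tendsto_zero_of_summable_integral_norm_sq {f : ℕ → Ω → E}
    (hf : ∀ n, Integrable (fun x => ‖f n x‖ ^ 2) μ)
    (hsum : Summable fun n => ∫ x, ‖f n x‖ ^ 2 ∂μ) :
    ∀ᵐ x ∂μ, Tendsto (fun n => f n x) atTop (𝓝 0) := by
  have hnorm : ∀ n, eLpNorm (fun x => ‖f n x‖ ^ 2) 1 μ = ENNReal.ofReal (∫ x, ‖f n x‖ ^ 2 ∂μ) := by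
    intro n
    rw [eLpNorm_one_eq_lintegral_enorm, ← ofReal_integral_norm_eq_lintegral_enorm (hf n)]
    simp
  have htop : ∑' n, eLpNorm (fun x => ‖f n x‖ ^ 2) 1 μ ≠ ∞ := by
    simp_rw [hnorm]
    rw [← ENNReal.ofReal_tsum_of_nonneg (fun n => by positivity) hsum]
    exact ENNReal.ofReal_ne_top
  filter_upwards [summable_norm_of_tsum_eLpNorm_ne_top le_rfl
    (fun n => (hf n).aestronglyMeasurable) htop] with x hx
  have hsqrt := (continuous_sqrt.tendsto 0).comp hx.tendsto_atTop_zero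
  rw [sqrt_zero] at hsqrt
  exact tendsto_zero_iff_norm_tendsto_zero.2 (hsqrt.congr fun n => by simp)

lemma integral_norm_average_sq_le [InnerProductSpace ℝ E] {f : ℕ → Ω → E} {C τ : ℝ}
    (hf : ∀ m n, Integrable (fun x => inner ℝ (f m x) (f n x)) μ) (hC : 0 ≤ C) (hτ0 : 0 ≤ τ)
    (hτ1 : τ < 1)
    (hfC : ∀ m n, ∫ x, inner ℝ (f m x) (f n x) ∂μ ≤ C * (1 + Nat.dist m n : ℝ) ^ (-τ)) (N : ℕ) :
    ∫ x, ‖(N : ℝ)⁻¹ • ∑ n ∈ Finset.Icc 1 N, f n x‖ ^ 2 ∂μ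
      ≤ 2 * C / (1 - τ) * (N : ℝ) ^ (-τ) := by
  have : 0 < 1 - τ := sub_pos.2 hτ1
  rcases N.eq_zero_or_pos with rfl | hN
  · simpa using mul_nonneg (by positivity) (zero_rpow_nonneg (-τ))
  have hN0 : (0 : ℝ) < N := Nat.cast_pos.2 hN
  calc ∫ x, ‖(N : ℝ)⁻¹ • ∑ n ∈ Finset.Icc 1 N, f n x‖ ^ 2 ∂μ
      = ((N : ℝ)⁻¹) ^ 2 * ∫ x, ‖∑ n ∈ Finset.Icc 1 N, f n x‖ ^ 2 ∂μ := by
        simp_rw [norm_smul, mul_pow, norm_inv, RCLike.norm_natCast]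
        exact integral_const_mul _ _
    _ ≤ ((N : ℝ)⁻¹) ^ 2 * (N * (2 * ∑ d ∈ Finset.range N, C * (1 + d : ℝ) ^ (-τ))) := by
        gcongr
        exact integral_norm_sum_sq_le hf (fun d => by positivity) hfC
    _ ≤ ((N : ℝ)⁻¹) ^ 2 * (N * (2 * (C * ((N : ℝ) ^ (1 - τ) / (1 - τ))))) := by
        rw [← Finset.mul_sum]
        gcongr
        exact sum_range_rpow_neg_le hτ0 hτ1 N
    _ = 2 * C / (1 - τ) * (N : ℝ) ^ (-τ) := by
        rw [sub_eq_neg_add, rpow_add_one hN0.ne']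
        field_simp

/-- The Davenport–Erdős–LeVeque form of the strong law of large numbers. -/
theorem ae_tendsto_average_of_integral_inner_le [IsFiniteMeasure μ] [InnerProductSpace ℝ E]
    {f : ℕ → Ω → E} {C τ : ℝ} (hf : ∀ n, AEStronglyMeasurable (f n) μ) (hf1 : ∀ n x, ‖f n x‖ ≤ 1)
    (hC : 0 ≤ C) (hτ : τ ∈ Set.Ioo (0 : ℝ) 1)
    (hfC : ∀ m n, ∫ x, inner ℝ (f m x) (f n x) ∂μ ≤ C * (1 + Nat.dist m n : ℝ) ^ (-τ)) :
    ∀ᵐ x ∂μ, Tendsto (fun N : ℕ => (N : ℝ)⁻¹ • ∑ n ∈ Finset.Icc 1 N, f n x) atTop (𝓝 0) := by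
  obtain ⟨A, hA⟩ := exists_nat_gt (1 / τ)
  have hA0 : A ≠ 0 := Nat.cast_ne_zero.1 ((one_div_pos.2 hτ.1).trans hA).ne'
  have hint : ∀ m n, Integrable (fun x => inner ℝ (f m x) (f n x)) μ := fun m n =>
    Integrable.of_bound ((hf m).inner (hf n)) 1 (ae_of_all _ fun x =>
      (norm_inner_le_norm _ _).trans (mul_le_one₀ (hf1 m x) (norm_nonneg _) (hf1 n x)))
  have hint_average : ∀ N : ℕ,
      Integrable (fun x => ‖(N : ℝ)⁻¹ • ∑ n ∈ Finset.Icc 1 N, f n x‖ ^ 2) μ := by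
    intro N
    simp_rw [← real_inner_self_eq_norm_sq, real_inner_smul_left, real_inner_smul_right,
      inner_sum, sum_inner]
    exact ((integrable_finsetSum _ fun n _ => integrable_finsetSum _ fun m _ =>
      hint m n).const_mul _).const_mul _
  have hsum : Summable fun k : ℕ =>
      ∫ x, ‖((k ^ A : ℕ) : ℝ)⁻¹ • ∑ n ∈ Finset.Icc 1 (k ^ A), f n x‖ ^ 2 ∂μ := by
    have hrpow : Summable fun k : ℕ => 2 * C / (1 - τ) * (k : ℝ) ^ (-(A * τ)) :=
      (summable_nat_rpow.2 (neg_lt_neg ((div_lt_iff₀ hτ.1).1 hA))).mul_left _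
    refine hrpow.of_nonneg_of_le (fun k => integral_nonneg fun x => by positivity) fun k => ?_
    refine (integral_norm_average_sq_le hint hC hτ.1.le hτ.2 hfC (k ^ A)).trans_eq ?_
    rw [Nat.cast_pow, ← rpow_natCast, ← rpow_mul k.cast_nonneg, mul_neg]
  filter_upwards [ae_tendsto_zero_of_summable_integral_norm_sq (fun k => hint_average (k ^ A)) hsum]
    with x hx
  exact tendsto_average_of_tendsto_average_pow (fun n => hf1 n x) hA0 hx

end Averages

section Equidistribution

lemma natCast_natDist (m n : ℕ) : (Nat.dist m n : ℝ) = |(m : ℝ) - n| := by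
  rcases le_total m n with h | h
  · rw [Nat.dist_eq_sub_of_le h, Nat.cast_sub h, abs_sub_comm, abs_of_nonneg (by simpa using h)]
  · rw [Nat.dist_eq_sub_of_le_right h, Nat.cast_sub h, abs_of_nonneg (by simpa using h)]

lemma natDist_le_natDist_of_strictMono {s : ℕ → ℕ} (hs : StrictMono s) (m n : ℕ) :
    Nat.dist m n ≤ Nat.dist (s m) (s n) := by
  rcases le_total m n with h | h
  · have := hs.add_le_nat (n - m) m
    rw [Nat.sub_add_cancel h] at this
    simp only [Nat.dist]; omega
  · have := hs.add_le_nat (m - n) n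
    rw [Nat.sub_add_cancel h] at this
    simp only [Nat.dist]; omega

lemma inner_fourier_coe (k : ℤ) (x y : ℝ) :
    inner ℝ (fourier k (x : UnitAddCircle)) (fourier k (y : UnitAddCircle))
      = (Complex.exp (((2 * π * k * (y - x) : ℝ) : ℂ) * Complex.I)).re := by
  rw [Complex.inner, ← fourier_neg, fourier_coe_apply, fourier_coe_apply, ← Complex.exp_add]
  congr 2
  push_cast
  ring

lemma integral_inner_fourier_le (μ : Measure ℝ) [IsFiniteMeasure μ] (k : ℤ) (u v : ℝ) :
    ∫ y, inner ℝ (fourier k ((u * y : ℝ) : UnitAddCircle))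
        (fourier k ((v * y : ℝ) : UnitAddCircle)) ∂μ
      ≤ ‖charFun μ (2 * π * k * (v - u))‖ := by
  have hint : Integrable
      (fun y : ℝ => Complex.exp (((2 * π * k * (v - u) : ℝ) : ℂ) * y * Complex.I)) μ :=
    Integrable.of_bound (by fun_prop) 1 (ae_of_all _ fun y => by
      rw [← Complex.ofReal_mul, Complex.norm_exp_ofReal_mul_I])
  refine le_of_eq_of_le ?_ (Complex.re_le_norm _)
  rw [charFun_apply_real]
  refine Eq.trans ?_ (integral_re hint)
  refine integral_congr_ae (ae_of_all _ fun y => ?_)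
  refine (inner_fourier_coe k _ _).trans ?_
  rw [← mul_sub_right_distrib]
  simp [mul_assoc]

lemma one_add_natDist_le_abs {s : ℕ → ℕ} (hs : StrictMono s) {k : ℤ} (hk : k ≠ 0) {m n : ℕ}
    (hmn : m ≠ n) : (1 + Nat.dist m n : ℝ) ≤ |2 * π * k * ((s n : ℝ) - s m)| := by
  have hdist : (1 : ℝ) ≤ Nat.dist m n := by exact_mod_cast Nat.dist_pos_of_ne hmn
  have hs_dist : (Nat.dist m n : ℝ) ≤ |(s n : ℝ) - s m| := by
    rw [abs_sub_comm, ← natCast_natDist]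
    exact_mod_cast natDist_le_natDist_of_strictMono hs m n
  have hk1 : (1 : ℝ) ≤ |(k : ℝ)| := by exact_mod_cast Int.one_le_abs hk
  rw [abs_mul, abs_mul, abs_of_pos two_pi_pos]
  calc (1 + Nat.dist m n : ℝ) ≤ 2 * 1 * 1 * Nat.dist m n := by linarith
    _ ≤ 2 * π * |(k : ℝ)| * |(s n : ℝ) - s m| := by
        gcongr
        linarith [pi_gt_three]

theorem ae_equidistributedMod1_of_norm_charFun_le {μ : Measure ℝ} [IsProbabilityMeasure μ]
    {C τ : ℝ} (hτ : τ ∈ Set.Ioo (0 : ℝ) 1)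
    (hμ : ∀ ξ : ℝ, 1 ≤ |ξ| → ‖charFun μ ξ‖ ≤ C * |ξ| ^ (-τ)) {s : ℕ → ℕ} (hs : StrictMono s) :
    ∀ᵐ y ∂μ, EquidistributedMod1 fun n => s n * y := by
  have hcorr : ∀ k : ℤ, k ≠ 0 → ∀ m n, ‖charFun μ (2 * π * k * ((s n : ℝ) - s m))‖
      ≤ max C 1 * (1 + Nat.dist m n : ℝ) ^ (-τ) := by
    intro k hk m n
    rcases eq_or_ne m n with rfl | hmn
    · simp
    have hle := one_add_natDist_le_abs hs hk hmn
    have hpos : (0 : ℝ) < 1 + Nat.dist m n := by positivity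
    refine (hμ _ (le_trans (by simp) hle)).trans ?_
    gcongr ?_ * ?_
    · exact le_max_left C 1
    · exact rpow_le_rpow_of_nonpos hpos hle (neg_nonpos.2 hτ.1.le)
  have hweyl : ∀ᵐ y ∂μ, ∀ k : ℤ, k ≠ 0 → Tendsto (fun N : ℕ =>
      (N : ℝ)⁻¹ • ∑ n ∈ Finset.Icc 1 N, fourier k ((s n * y : ℝ) : UnitAddCircle)) atTop (𝓝 0) := by
    refine ae_all_iff.2 fun k => eventually_imp_distrib_left.2 fun hk => ?_
    refine ae_tendsto_average_of_integral_inner_le (C := max C 1) (fun n => ?_) (fun n y => ?_)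
      (by positivity) hτ fun m n => (integral_inner_fourier_le μ k _ _).trans (hcorr k hk m n)
    · exact ((fourier k).continuous.comp (by fun_prop)).aestronglyMeasurable
    · rw [fourier_apply, Circle.norm_coe]
  exact hweyl.mono fun y hy => equidistributedMod1_of_tendsto_fourier hy

end Equidistribution

section DigitLaw

variable {ι : Type*} [Fintype ι] {p : ι → ℝ}

lemma isProbabilityMeasure_sum_smul_dirac (hp : ∀ i, 0 ≤ p i) (hp1 : ∑ i, p i = 1) (a : ι → ℝ) :
    IsProbabilityMeasure (∑ i, ENNReal.ofReal (p i) • Measure.dirac (a i)) :=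
  ⟨by simp [← ENNReal.ofReal_sum_of_nonneg fun i _ => hp i, hp1]⟩

lemma ae_sum_smul_dirac_abs_le (a p : ι → ℝ) :
    ∀ᵐ x ∂∑ i, ENNReal.ofReal (p i) • Measure.dirac (a i), |x| ≤ ∑ i, |a i| := by
  rw [ae_iff, Measure.finsetSum_apply]
  refine Finset.sum_eq_zero fun i _ => ?_
  have hi : |a i| ≤ ∑ j, |a j| :=
    Finset.single_le_sum (f := fun j => |a j|) (fun j _ => abs_nonneg _) (Finset.mem_univ i)
  simp [hi]

lemma sum_smul_dirac_singleton_ne_zero {i : ι} (hp : 0 < p i) (a : ι → ℝ) :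
    (∑ i, ENNReal.ofReal (p i) • Measure.dirac (a i)) {a i} ≠ 0 := by
  rw [Measure.finsetSum_apply]
  exact fun h => by simpa [hp.not_ge] using Finset.sum_eq_zero_iff.1 h i (Finset.mem_univ i)

end DigitLaw

theorem IsHomogeneousSelfSimilar.ae_equidistributedMod1 {ρ : ℝ} {ν μ : Measure ℝ}
    [IsProbabilityMeasure ν] [IsProbabilityMeasure μ] (h : IsHomogeneousSelfSimilar ρ ν μ)
    (hρ0 : 0 < ρ) (hρ1 : ρ < 1) {D : ℝ} (hD : ∀ᵐ x ∂ν, |x| ≤ D) {a b : ℝ} (ha : ν {a} ≠ 0)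
    (hb : ν {b} ≠ 0) (hab : a ≠ b) {φ : ℝ → ℝ} (hφ : ContDiff ℝ 2 φ)
    (hφ'' : ∀ t, 0 < deriv (deriv φ) t) {s : ℕ → ℕ} (hs : StrictMono s) :
    ∀ᵐ x ∂μ, EquidistributedMod1 fun n => s n * φ x := by
  wlog hlt : a < b generalizing a b
  · exact this hb ha hab.symm (hab.lt_or_gt.resolve_left hlt)
  obtain ⟨C, τ, hτ, hdecay⟩ :=
    h.exists_norm_charFun_map_le_rpow hρ0 hρ1 hD ha hb hlt hφ hφ''
  have hφm : AEMeasurable φ μ := hφ.continuous.aemeasurable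
  have := Measure.isProbabilityMeasure_map hφm
  exact ae_of_ae_map hφm (ae_equidistributedMod1_of_norm_charFun_le hτ hdecay hs)

theorem stmt5_general {ι : Type*} [Fintype ι] {ρ : ℝ} (hρ0 : 0 < ρ) (hρ1 : ρ < 1)
    {a p : ι → ℝ} (hp : ∀ i, 0 < p i) (hp1 : ∑ i, p i = 1) {i j : ι} (hij : a i ≠ a j)
    {μ : Measure ℝ} [IsProbabilityMeasure μ]
    (hμ : μ = ∑ i, ENNReal.ofReal (p i) • μ.map (fun x => ρ * x + a i))
    {φ : ℝ → ℝ} (hφ : ContDiff ℝ 2 φ) (hφ'' : ∀ t, 0 < deriv (deriv φ) t) :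
    (∀ s : ℕ → ℕ, StrictMono s → ∀ᵐ x ∂μ, EquidistributedMod1 fun n => s n * φ x) ∧
      ∀ᵐ x ∂μ, ∀ b : ℕ, 2 ≤ b → EquidistributedMod1 fun n => (b : ℝ) ^ n * φ x := by
  have := isProbabilityMeasure_sum_smul_dirac (fun i => (hp i).le) hp1 a
  have hequi : ∀ s : ℕ → ℕ, StrictMono s → ∀ᵐ x ∂μ, EquidistributedMod1 fun n => s n * φ x :=
    fun s => (IsHomogeneousSelfSimilar.of_eq_sum hμ).ae_equidistributedMod1 hρ0 hρ1
      (ae_sum_smul_dirac_abs_le a p) (sum_smul_dirac_singleton_ne_zero (hp i) a)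
      (sum_smul_dirac_singleton_ne_zero (hp j) a) hij hφ hφ''
  refine ⟨hequi, ae_all_iff.2 fun b => eventually_imp_distrib_left.2 fun hb => ?_⟩
  simpa only [Nat.cast_pow] using hequi (b ^ ·) fun _ _ => Nat.pow_lt_pow_right hb

lemma translation_ne_of_disjoint_image {ρ a b : ℝ} {K : Set ℝ} (hK : K.Nonempty)
    (h : Disjoint ((fun x => ρ * x + a) '' K) ((fun x => ρ * x + b) '' K)) : a ≠ b := by
  rintro rfl
  exact (hK.image _).ne_empty (disjoint_self.1 h)

/-- for the homogeneous self-similar measure `μ` (with strong separation) and a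
`C²` map `φ` with `φ'' > 0`, for every strictly increasing sequence of positive integers
`(s n)`, for `μ`-a.e. `x` the sequence `(s n * φ x)` is equidistributed mod 1; in particular
for `μ`-a.e. `x`, `φ x` is normal in every integer base `b ≥ 2`. -/
theorem stmt5
    (m : ℕ) (hm : 2 ≤ m) (ρ : ℝ) (hρ0 : 0 < ρ) (hρ1 : ρ < 1)
    (a : Fin m → ℝ) (p : Fin m → ℝ) (hp : ∀ j, 0 < p j) (hp1 : ∑ j, p j = 1)
    (μ : Measure ℝ) [IsProbabilityMeasure μ]
    (hμ : μ = ∑ j : Fin m, ENNReal.ofReal (p j) • Measure.map (fun x => ρ * x + a j) μ)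
    (K : Set ℝ) (hKc : IsCompact K) (hKne : K.Nonempty)
    (hKattr : K = ⋃ j : Fin m, (fun x => ρ * x + a j) '' K)
    (hsep : ∀ j j' : Fin m, j ≠ j' →
      Disjoint ((fun x => ρ * x + a j) '' K) ((fun x => ρ * x + a j') '' K))
    (φ : ℝ → ℝ) (hφ : ContDiff ℝ 2 φ) (hφ'' : ∀ t, 0 < deriv (deriv φ) t) :
    (∀ s : ℕ → ℕ, StrictMono s → (∀ n, 0 < s n) →
      ∀ᵐ x ∂μ, EquidistributedMod1 (fun n => (s n : ℝ) * φ x)) ∧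
    (∀ᵐ x ∂μ, ∀ b : ℕ, 2 ≤ b →
      EquidistributedMod1 (fun n => (b : ℝ) ^ n * φ x)) := by
  have hne := translation_ne_of_disjoint_image hKne (hsep ⟨0, by omega⟩ ⟨1, hm⟩ (by simp))
  exact (stmt5_general hρ0 hρ1 hp hp1 hne hμ hφ hφ'').imp_left fun h s hs _ => h s hs
end

section
/- Fix c_0 > 0, θ > 1 and a closed interval [H_1, H_2] ⊂ ℝ. For ε > 0 and N ∈ ℕ let Γ_N(ε) = {x ∈ [H_1, H_2] : #{1 ≤ k ≤ N : ‖c_0 θ^k x‖ < 1/(2(1+θ))} > (1−ε)N}. Then for every ε ∈ (0, 1/2) there exist a constant C > 0 and N_0 ∈ ℕ such that for all N ≥ N_0, the set Γ_N(ε) can be covered by at most C·exp(ω(ε)N) intervals each of length c_0^{−1}θ^{−N}, where ω(ε) = −ε log ε − (1−ε)log(1−ε) + 2ε log(θ+2). -/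
open Real

/-- The distance from a real number to its nearest integer. -/
noncomputable def distNearestInt (x : ℝ) : ℝ := |x - round x|

/-!
Let `mₖ` be the integer nearest to `yₖ = c₀ θᵏ x`. Since `|mₖ₊₁ - θ mₖ| ≤ ‖yₖ₊₁‖ + θ ‖yₖ‖`, which
is at most `(1 + θ) / 2`, there are at most `θ + 2` choices for `mₖ₊₁` once `mₖ` is known; and if
both `‖yₖ‖` and `‖yₖ₊₁‖` are less than `1 / (2 (1 + θ))`, then `|mₖ₊₁ - θ mₖ| < 1 / 2`, so that `mₖ`
determines `mₖ₊₁`. A set of `b` exceptional indices spoils at most `2 b + 1` steps, and therefore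
allows at most `(θ + 2) ^ (2 b + 1)` values of `m_N` for each of the boundedly many values of `m₀`;
and `m_N` confines `x` to an interval of length `c₀⁻¹ θ⁻ᴺ`. Summing over the at most `exp (N H(ε))`
sets of at most `ε N` exceptional indices, `H` being the binary entropy, gives the bound.
-/

section Counting

open Finset

variable {α β : Type*} [DecidableEq β]

lemma cast_card_biUnion_le_card_mul {s : Finset α} {f : α → Finset β} {b : ℝ}
    (hf : ∀ a ∈ s, (#(f a) : ℝ) ≤ b) : (#(s.biUnion f) : ℝ) ≤ #s * b := by
  calc (#(s.biUnion f) : ℝ) ≤ ∑ a ∈ s, (#(f a) : ℝ) := mod_cast card_biUnion_le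
    _ ≤ #s * b := by simpa only [nsmul_eq_mul] using sum_le_card_nsmul s _ b hf

/-- The possible values at time `n` of a sequence that starts in `S` and whose term at time `k + 1`
is chosen from `next k a`, where `a` is its term at time `k`. -/
def reachable (next : ℕ → β → Finset β) (S : Finset β) : ℕ → Finset β
  | 0 => S
  | n + 1 => (reachable next S n).biUnion (next n)

lemma mem_reachable {next : ℕ → β → Finset β} {S : Finset β} {u : ℕ → β} (h₀ : u 0 ∈ S) {n : ℕ}
    (hnext : ∀ k < n, u (k + 1) ∈ next k (u k)) : u n ∈ reachable next S n := by
  induction n with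
  | zero => exact h₀
  | succ n ih =>
    exact mem_biUnion.mpr
      ⟨u n, ih fun k hk => hnext k (hk.trans n.lt_succ_self), hnext n n.lt_succ_self⟩

lemma card_reachable_le {next : ℕ → β → Finset β} {q : ℕ → ℝ} (hq : ∀ k, 0 ≤ q k)
    (hnext : ∀ k b, (#(next k b) : ℝ) ≤ q k) (S : Finset β) (n : ℕ) :
    (#(reachable next S n) : ℝ) ≤ #S * ∏ k ∈ range n, q k := by
  induction n with
  | zero => simp [reachable]
  | succ n ih =>
    calc (#(reachable next S (n + 1)) : ℝ) ≤ #(reachable next S n) * q n :=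
          cast_card_biUnion_le_card_mul fun b _ => hnext n b
      _ ≤ #S * (∏ k ∈ range n, q k) * q n := mul_le_mul_of_nonneg_right ih (hq n)
      _ = #S * ∏ k ∈ range (n + 1), q k := by rw [prod_range_succ, mul_assoc]

end Counting

section Entropy

open Finset

variable {p : ℝ}

lemma exp_neg_binEntropy_mul_le_pow_mul_pow (hp₀ : 0 < p) (hp : p ≤ 1 / 2) {k n : ℕ} (hkn : k ≤ n)
    (hk : (k : ℝ) ≤ p * n) : exp (-(binEntropy p * n)) ≤ p ^ k * (1 - p) ^ (n - k) := by
  have hp₁ : 0 < 1 - p := by linarith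
  have hlog : log p ≤ log (1 - p) := log_le_log hp₀ (by linarith)
  have hexponent : -(binEntropy p * n) ≤ k * log p + (n - k : ℕ) * log (1 - p) := by
    rw [binEntropy, log_inv, log_inv, Nat.cast_sub hkn]
    linarith [mul_nonneg (sub_nonneg.mpr hk) (sub_nonneg.mpr hlog)]
  calc exp (-(binEntropy p * n)) ≤ exp (k * log p + (n - k : ℕ) * log (1 - p)) :=
        exp_le_exp.mpr hexponent
    _ = p ^ k * (1 - p) ^ (n - k) := by
        rw [exp_add, exp_nat_mul, exp_nat_mul, exp_log hp₀, exp_log hp₁]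

-- Every set counted has mass at least `exp (-n H(p))` under the Bernoulli(`p`) measure on subsets.
lemma card_filter_card_le_mul_le_exp_binEntropy {α : Type*} (s : Finset α) (hp₀ : 0 < p)
    (hp : p ≤ 1 / 2) :
    (#{t ∈ s.powerset | (#t : ℝ) ≤ p * #s} : ℝ) ≤ exp (binEntropy p * #s) := by
  have hp₁ : 0 ≤ 1 - p := by linarith
  have hmass : #{t ∈ s.powerset | (#t : ℝ) ≤ p * #s} * exp (-(binEntropy p * #s)) ≤ 1 := by
    calc #{t ∈ s.powerset | (#t : ℝ) ≤ p * #s} * exp (-(binEntropy p * #s))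
        ≤ ∑ t ∈ s.powerset with (#t : ℝ) ≤ p * #s, p ^ #t * (1 - p) ^ (#s - #t) := by
          rw [← nsmul_eq_mul]
          refine card_nsmul_le_sum _ _ _ fun t ht => ?_
          obtain ⟨hts, htp⟩ := mem_filter.mp ht
          exact exp_neg_binEntropy_mul_le_pow_mul_pow hp₀ hp
            (card_le_card (mem_powerset.mp hts)) htp
      _ ≤ ∑ t ∈ s.powerset, p ^ #t * (1 - p) ^ (#s - #t) :=
          sum_le_sum_of_subset_of_nonneg (filter_subset _ _) fun t _ _ => by positivity
      _ = 1 := by rw [sum_pow_mul_eq_add_pow, add_sub_cancel, one_pow]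
  rwa [exp_neg, ← div_eq_mul_inv, div_le_one (exp_pos _)] at hmass

lemma pow_le_exp_log_mul {b t : ℝ} (hb : 1 ≤ b) {k : ℕ} (hk : (k : ℝ) ≤ t) :
    b ^ k ≤ exp (log b * t) := by
  rw [← rpow_natCast, ← rpow_def_of_pos (zero_lt_one.trans_le hb)]
  exact rpow_le_rpow_of_exponent_le hb hk

end Entropy

section Rounding

open Finset

/-- The integers at distance at most `r` from the real number `a`. -/
noncomputable def nearbyInts (a r : ℝ) : Finset ℤ := Icc ⌈a - r⌉ ⌊a + r⌋

lemma mem_nearbyInts {a r : ℝ} {m : ℤ} : m ∈ nearbyInts a r ↔ |(m : ℝ) - a| ≤ r := by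
  rw [nearbyInts, mem_Icc, Int.ceil_le, Int.le_floor, abs_sub_le_iff]
  constructor <;> rintro ⟨_, _⟩ <;> constructor <;> linarith

lemma card_nearbyInts_le {r : ℝ} (hr : 0 ≤ r) (a : ℝ) : (#(nearbyInts a r) : ℝ) ≤ 2 * r + 1 := by
  have hfloor := Int.floor_le (a + r)
  have hceil := Int.le_ceil (a - r)
  rcases le_total ⌈a - r⌉ (⌊a + r⌋ + 1) with h | h
  · have hcard : (#(nearbyInts a r) : ℝ) = ⌊a + r⌋ + 1 - ⌈a - r⌉ :=
      mod_cast Int.card_Icc_of_le _ _ h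
    linarith
  · rw [nearbyInts, Int.card_Icc, Int.toNat_of_nonpos (by linarith), Nat.cast_zero]
    positivity

lemma round_mono {K : Type*} [Field K] [LinearOrder K] [IsStrictOrderedRing K] [FloorRing K] :
    Monotone (round : K → ℤ) := fun a b hab => by
  simpa only [round_eq] using Int.floor_le_floor (add_le_add_left hab (1 / 2))

lemma distNearestInt_le_half (y : ℝ) : distNearestInt y ≤ 1 / 2 := abs_sub_round y

variable {θ y : ℝ}

lemma abs_round_mul_sub_mul_round_le (hθ : 0 ≤ θ) (y : ℝ) :
    |(round (θ * y) : ℝ) - θ * round y| ≤ distNearestInt (θ * y) + θ * distNearestInt y := by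
  calc |(round (θ * y) : ℝ) - θ * round y|
      ≤ |(round (θ * y) : ℝ) - θ * y| + |θ * y - θ * round y| := abs_sub_le _ _ _
    _ = distNearestInt (θ * y) + θ * distNearestInt y := by
        rw [← mul_sub, abs_mul, abs_of_nonneg hθ, abs_sub_comm, distNearestInt, distNearestInt]

lemma round_mul_mem_nearbyInts (hθ : 0 ≤ θ) (y : ℝ) :
    round (θ * y) ∈ nearbyInts (θ * round y) ((1 + θ) / 2) := by
  have hy := mul_le_mul_of_nonneg_left (distNearestInt_le_half y) hθ
  exact mem_nearbyInts.mpr <| (abs_round_mul_sub_mul_round_le hθ y).trans <| by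
    linarith [distNearestInt_le_half (θ * y)]

lemma round_mul_round_eq (hθ : 0 ≤ θ) (hy : distNearestInt y < 1 / (2 * (1 + θ)))
    (hθy : distNearestInt (θ * y) < 1 / (2 * (1 + θ))) : round (θ * round y) = round (θ * y) := by
  have hclose : |(round (θ * y) : ℝ) - θ * round y| < 1 / 2 := by
    calc |(round (θ * y) : ℝ) - θ * round y|
        ≤ distNearestInt (θ * y) + θ * distNearestInt y := abs_round_mul_sub_mul_round_le hθ y
      _ < 1 / (2 * (1 + θ)) + θ * (1 / (2 * (1 + θ))) :=
          add_lt_add_of_lt_of_le hθy (mul_le_mul_of_nonneg_left hy.le hθ)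
      _ = 1 / 2 := by field_simp
  obtain ⟨hlower, hupper⟩ := abs_lt.mp hclose
  exact round_eq_iff.mpr ⟨by linarith, by linarith⟩

lemma mem_Icc_round_mul {a : ℝ} (ha : 0 < a) (x : ℝ) :
    x ∈ Set.Icc ((round (a * x) - 1 / 2) * a⁻¹) ((round (a * x) - 1 / 2) * a⁻¹ + a⁻¹) := by
  obtain ⟨hlower, hupper⟩ := abs_le.mp (abs_sub_round (a * x))
  rw [← add_one_mul, ← div_eq_mul_inv, ← div_eq_mul_inv, Set.mem_Icc, div_le_iff₀' ha,
    le_div_iff₀' ha]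
  constructor <;> linarith

end Rounding

section Tracking

open Finset

variable {c₀ θ : ℝ}

/-- The candidates for `round (θ ^ (k + 1) * y)` when `round (θ ^ k * y) = m`: all integers that
rounding allows at the times `k ∈ D`, a single one at the other times. -/
noncomputable def roundSuccessors (θ : ℝ) (D : Finset ℕ) (k : ℕ) (m : ℤ) : Finset ℤ :=
  if k ∈ D then nearbyInts (θ * m) ((1 + θ) / 2) else {round (θ * m)}

lemma card_roundSuccessors_le (hθ : 0 ≤ θ) (D : Finset ℕ) (k : ℕ) (m : ℤ) :
    (#(roundSuccessors θ D k m) : ℝ) ≤ if k ∈ D then θ + 2 else 1 := by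
  unfold roundSuccessors
  split_ifs
  · linarith [card_nearbyInts_le (r := (1 + θ) / 2) (by positivity) (θ * m)]
  · simp

lemma round_mul_mem_roundSuccessors (hθ : 0 ≤ θ) {D : Finset ℕ} {k : ℕ} {y : ℝ}
    (hD : k ∉ D → distNearestInt y < 1 / (2 * (1 + θ)) ∧
      distNearestInt (θ * y) < 1 / (2 * (1 + θ))) :
    round (θ * y) ∈ roundSuccessors θ D k (round y) := by
  unfold roundSuccessors
  split_ifs with hk
  · exact round_mul_mem_nearbyInts hθ y
  · exact mem_singleton.mpr (round_mul_round_eq hθ (hD hk).1 (hD hk).2).symm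

lemma card_reachable_roundSuccessors_le (hθ : 0 ≤ θ) (D : Finset ℕ) (S : Finset ℤ) (N : ℕ) :
    (#(reachable (roundSuccessors θ D) S N) : ℝ) ≤ #S * (θ + 2) ^ #D := by
  have hθ₂ : 1 ≤ θ + 2 := by linarith
  calc (#(reachable (roundSuccessors θ D) S N) : ℝ)
      ≤ #S * ∏ k ∈ range N, if k ∈ D then θ + 2 else 1 :=
        card_reachable_le (fun k => by split_ifs <;> positivity) (card_roundSuccessors_le hθ D) S N
    _ = #S * (θ + 2) ^ #(range N ∩ D) := by rw [prod_ite_mem, prod_const]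
    _ ≤ #S * (θ + 2) ^ #D := by gcongr; exact inter_subset_right

lemma round_pow_mul_mem_reachable (hθ : 0 ≤ θ) {D : Finset ℕ} {S : Finset ℤ} {N : ℕ} {y : ℝ}
    (hS : round y ∈ S)
    (hD : ∀ k < N, k ∉ D → distNearestInt (θ ^ k * y) < 1 / (2 * (1 + θ)) ∧
      distNearestInt (θ ^ (k + 1) * y) < 1 / (2 * (1 + θ))) :
    round (θ ^ N * y) ∈ reachable (roundSuccessors θ D) S N := by
  refine mem_reachable (u := fun k => round (θ ^ k * y)) (by simpa using hS) fun k hk => ?_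
  have hpow : θ ^ (k + 1) * y = θ * (θ ^ k * y) := by rw [pow_succ', mul_assoc]
  simpa only [hpow] using round_mul_mem_roundSuccessors hθ (by simpa only [hpow] using hD k hk)

/-- The times `k` for which `k = 0`, `k ∈ B` or `k + 1 ∈ B`. Time `0` is always included, since
nothing is assumed about the distance of `c₀ * θ ^ 0 * x` to the integers. -/
def stepsMeeting (B : Finset ℕ) : Finset ℕ := insert 0 (B ∪ B.image Nat.pred)

lemma notMem_of_notMem_stepsMeeting {B : Finset ℕ} {k : ℕ} (hk : k ∉ stepsMeeting B) :
    k ≠ 0 ∧ k ∉ B ∧ k + 1 ∉ B := by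
  simp only [stepsMeeting, mem_insert, mem_union, mem_image, not_or] at hk
  exact ⟨hk.1, hk.2.1, fun hB => hk.2.2 ⟨k + 1, hB, k.pred_succ⟩⟩

lemma card_stepsMeeting_le (B : Finset ℕ) : #(stepsMeeting B) ≤ 2 * #B + 1 := by
  calc #(stepsMeeting B) ≤ #B + #(B.image Nat.pred) + 1 :=
        (card_insert_le _ _).trans (Nat.add_le_add_right (card_union_le _ _) 1)
    _ ≤ 2 * #B + 1 := by linarith [card_image_le (s := B) (f := Nat.pred)]

/-- The exceptional indices of `x`: those `1 ≤ k ≤ N` for which `c₀ * θ ^ k * x` is not within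
`1 / (2 * (1 + θ))` of an integer. -/
noncomputable def farIndices (c₀ θ : ℝ) (N : ℕ) (x : ℝ) : Finset ℕ :=
  {k ∈ Icc 1 N | ¬ distNearestInt (c₀ * θ ^ k * x) < 1 / (2 * (1 + θ))}

lemma card_farIndices (c₀ θ : ℝ) (N : ℕ) (x : ℝ) :
    (#(farIndices c₀ θ N x) : ℝ) =
      N - #{k ∈ Icc 1 N | distNearestInt (c₀ * θ ^ k * x) < 1 / (2 * (1 + θ))} := by
  have hsplit := card_filter_add_card_filter_not (s := Icc 1 N)
    (fun k => distNearestInt (c₀ * θ ^ k * x) < 1 / (2 * (1 + θ)))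
  rw [Nat.card_Icc, Nat.add_sub_cancel] at hsplit
  exact eq_sub_of_add_eq' (mod_cast hsplit)

lemma round_mul_mem_reachable_stepsMeeting (hθ : 0 ≤ θ) {S : Finset ℤ} {x : ℝ}
    (hS : round (c₀ * x) ∈ S) (N : ℕ) :
    round (c₀ * θ ^ N * x) ∈
      reachable (roundSuccessors θ (stepsMeeting (farIndices c₀ θ N x))) S N := by
  have hcomm (k : ℕ) : θ ^ k * (c₀ * x) = c₀ * θ ^ k * x := by ring
  have hclose {k : ℕ} (hk₁ : 1 ≤ k) (hkN : k ≤ N) (hk : k ∉ farIndices c₀ θ N x) :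
      distNearestInt (c₀ * θ ^ k * x) < 1 / (2 * (1 + θ)) := by
    by_contra hfar
    exact hk (mem_filter.mpr ⟨mem_Icc.mpr ⟨hk₁, hkN⟩, hfar⟩)
  rw [← hcomm N]
  refine round_pow_mul_mem_reachable hθ hS fun k hkN hk => ?_
  obtain ⟨hk₀, hk, hk'⟩ := notMem_of_notMem_stepsMeeting hk
  rw [hcomm, hcomm]
  exact ⟨hclose (Nat.one_le_iff_ne_zero.mpr hk₀) hkN.le hk, hclose k.succ_pos hkN hk'⟩

end Tracking

section Covering

open Finset

variable {c₀ θ : ℝ} {A : Set ℝ} {S : Finset ℤ}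

lemma exists_cover_farIndices_eq (hc₀ : 0 < c₀) (hθ : 0 < θ) (hAS : ∀ x ∈ A, round (c₀ * x) ∈ S)
    (N : ℕ) (B : Finset ℕ) :
    ∃ F : Finset ℝ, (#F : ℝ) ≤ #S * (θ + 2) ^ (2 * #B + 1) ∧
      {x ∈ A | farIndices c₀ θ N x = B} ⊆ ⋃ y ∈ F, Set.Icc y (y + c₀⁻¹ * (θ ^ N)⁻¹) := by
  refine ⟨(reachable (roundSuccessors θ (stepsMeeting B)) S N).image
    fun m : ℤ => ((m : ℝ) - 1 / 2) * (c₀ * θ ^ N)⁻¹, ?_, ?_⟩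
  · have hθ₂ : 1 ≤ θ + 2 := by linarith
    calc _ ≤ (#(reachable (roundSuccessors θ (stepsMeeting B)) S N) : ℝ) := mod_cast card_image_le
      _ ≤ #S * (θ + 2) ^ #(stepsMeeting B) := card_reachable_roundSuccessors_le hθ.le _ S N
      _ ≤ #S * (θ + 2) ^ (2 * #B + 1) := by gcongr; exact card_stepsMeeting_le B
  · rintro x ⟨hxA, rfl⟩
    have hmem := round_mul_mem_reachable_stepsMeeting hθ.le (hAS x hxA) N
    rw [← mul_inv]
    exact Set.mem_biUnion (mem_image_of_mem _ hmem) (mem_Icc_round_mul (by positivity) x)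

lemma exists_cover_card_farIndices_le (hc₀ : 0 < c₀) (hθ : 0 < θ)
    (hAS : ∀ x ∈ A, round (c₀ * x) ∈ S) {ε : ℝ} (hε₀ : 0 < ε) (hε : ε ≤ 1 / 2) (N : ℕ) :
    ∃ F : Finset ℝ,
      (#F : ℝ) ≤ #S * (θ + 2) * exp ((binEntropy ε + 2 * ε * log (θ + 2)) * N) ∧
      {x ∈ A | (#(farIndices c₀ θ N x) : ℝ) ≤ ε * N} ⊆
        ⋃ y ∈ F, Set.Icc y (y + c₀⁻¹ * (θ ^ N)⁻¹) := by
  choose F hFcard hFcover using exists_cover_farIndices_eq hc₀ hθ hAS N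
  set P : Finset (Finset ℕ) := {B ∈ (Icc 1 N).powerset | (#B : ℝ) ≤ ε * N}
  have hPcard : (#P : ℝ) ≤ exp (binEntropy ε * N) := by
    simpa using card_filter_card_le_mul_le_exp_binEntropy (Icc 1 N) hε₀ hε
  have hFcard' (B : Finset ℕ) (hB : B ∈ P) :
      (#(F B) : ℝ) ≤ #S * (θ + 2) * exp (log (θ + 2) * (2 * (ε * N))) := by
    have hBcard : ((2 * #B : ℕ) : ℝ) ≤ 2 * (ε * N) := by
      push_cast
      linarith [(mem_filter.mp hB).2]
    calc (#(F B) : ℝ) ≤ #S * (θ + 2) * (θ + 2) ^ (2 * #B) := by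
          simpa only [pow_succ', mul_assoc] using hFcard B
      _ ≤ _ := by gcongr; exact pow_le_exp_log_mul (by linarith) hBcard
  refine ⟨P.biUnion F, ?_, ?_⟩
  · calc (#(P.biUnion F) : ℝ)
        ≤ #P * (#S * (θ + 2) * exp (log (θ + 2) * (2 * (ε * N)))) :=
          cast_card_biUnion_le_card_mul hFcard'
      _ ≤ exp (binEntropy ε * N) * (#S * (θ + 2) * exp (log (θ + 2) * (2 * (ε * N)))) := by gcongr
      _ = #S * (θ + 2) * exp ((binEntropy ε + 2 * ε * log (θ + 2)) * N) := by
          rw [mul_left_comm, ← exp_add]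
          ring_nf
  · rintro x ⟨hxA, hx⟩
    have hBP : farIndices c₀ θ N x ∈ P :=
      mem_filter.mpr ⟨mem_powerset.mpr (filter_subset _ _), hx⟩
    exact Set.biUnion_subset_biUnion_left (subset_biUnion_of_mem F hBP) (hFcover _ ⟨hxA, rfl⟩)

theorem stmt6_general (hc₀ : 0 < c₀) (hθ : 0 < θ) (H₁ H₂ : ℝ) :
    ∃ C > (0 : ℝ), ∀ ε ∈ Set.Ioc (0 : ℝ) (1 / 2), ∀ N : ℕ,
      ∃ F : Finset ℝ,
        (#F : ℝ) ≤ C * exp ((-ε * log ε - (1 - ε) * log (1 - ε) + 2 * ε * log (θ + 2)) * N) ∧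
        {x ∈ Set.Icc H₁ H₂ |
            (1 - ε) * N <
              (#{k ∈ Icc 1 N | distNearestInt (c₀ * θ ^ k * x) < 1 / (2 * (1 + θ))} : ℝ)}
          ⊆ ⋃ y ∈ F, Set.Icc y (y + c₀⁻¹ * (θ ^ N)⁻¹) := by
  set S : Finset ℤ := Icc (round (c₀ * H₁)) (round (c₀ * H₂))
  have hS : ∀ x ∈ Set.Icc H₁ H₂, round (c₀ * x) ∈ S := fun x hx =>
    mem_Icc.mpr ⟨round_mono (by gcongr; exact hx.1), round_mono (by gcongr; exact hx.2)⟩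
  refine ⟨(#S + 1) * (θ + 2), by positivity, fun ε hε N => ?_⟩
  have hentropy : -ε * log ε - (1 - ε) * log (1 - ε) = binEntropy ε := by
    rw [binEntropy, log_inv, log_inv]
    ring
  obtain ⟨F, hFcard, hFcover⟩ := exists_cover_card_farIndices_le hc₀ hθ hS hε.1 hε.2 N
  refine ⟨F, ?_, fun x hx => hFcover ⟨hx.1, ?_⟩⟩
  · rw [hentropy]
    refine hFcard.trans ?_
    gcongr
    linarith
  · linarith [card_farIndices c₀ θ N x, hx.2]

end Covering

/-- the combinatorial covering lemma. For `ε ∈ (0, 1/2)` and all large `N`,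
the set `Γ_N(ε)` of `x ∈ [H₁, H₂]` such that `‖c₀ θ^k x‖ < 1/(2(1+θ))` for more than
`(1-ε)N` of the indices `1 ≤ k ≤ N` can be covered by at most `C · exp(ω(ε)N)` intervals
of length `c₀⁻¹ θ^{-N}`, where
`ω(ε) = -ε log ε - (1-ε) log (1-ε) + 2ε log (θ+2)`. -/
theorem stmt6
    (c₀ : ℝ) (hc₀ : 0 < c₀) (θ : ℝ) (hθ : 1 < θ) (H₁ H₂ : ℝ) (hH : H₁ ≤ H₂)
    (ε : ℝ) (hε : ε ∈ Set.Ioo (0 : ℝ) (1 / 2)) :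
    ∃ C > (0 : ℝ), ∃ N₀ : ℕ, ∀ N : ℕ, N₀ ≤ N →
      ∃ F : Finset ℝ,
        (F.card : ℝ) ≤ C * Real.exp
          ((-ε * Real.log ε - (1 - ε) * Real.log (1 - ε) + 2 * ε * Real.log (θ + 2)) * N) ∧
        {x ∈ Set.Icc H₁ H₂ |
            (1 - ε) * N <
              (((Finset.Icc 1 N).filter fun k =>
                  distNearestInt (c₀ * θ ^ k * x) < 1 / (2 * (1 + θ))).card : ℝ)}
          ⊆ ⋃ y ∈ F, Set.Icc y (y + c₀⁻¹ * (θ ^ N)⁻¹) := by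
  obtain ⟨C, hC, hcover⟩ := stmt6_general hc₀ (zero_lt_one.trans hθ) H₁ H₂
  exact ⟨C, hC, 0, fun N _ => hcover ε ⟨hε.1, hε.2.le⟩ N⟩
end

section
/- Fix c_0 > 0 and θ > 1, and let x ∈ ℝ. For each k ∈ ℕ write c_0 θ^k x = r_k + ε_k with r_k ∈ ℤ and ε_k ∈ (−1/2, 1/2]. If max{|ε_k|, |ε_{k+1}|} < 1/(2(1+θ)), then |r_{k+1} − θ r_k| < 1/2; in particular, r_{k+1} is the unique integer in the open interval (θ r_k − 1/2, θ r_k + 1/2), i.e., r_{k+1} is uniquely determined by r_k. -/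
/-! If `y = m + δ` and `θ * y = n + ε`, then `y` cancels from `n - θ * m`, which is therefore the
combination `θ * δ - ε` of the rounding errors alone. If both errors are smaller than
`1 / (2 * (1 + |θ|))`, it lies strictly between `-1 / 2` and `1 / 2`, and an open interval of length
`1` contains at most one integer. -/

theorem subsingleton_intCast_preimage_Ioo {R : Type*} [Ring R] [LinearOrder R]
    [IsStrictOrderedRing R] {a b : R} (hab : b ≤ a + 1) :
    ((Int.cast : ℤ → R) ⁻¹' Set.Ioo a b).Subsingleton := by
  have le_of_mem {m n : ℤ} (hm : (m : R) ∈ Set.Ioo a b) (hn : (n : R) ∈ Set.Ioo a b) : m ≤ n := by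
    have : (m : R) < n + 1 := calc
      (m : R) < b := hm.2
      _ ≤ a + 1 := hab
      _ < n + 1 := by gcongr; exact hn.1
    exact Int.lt_add_one_iff.mp (mod_cast this)
  exact fun m hm n hn ↦ le_antisymm (le_of_mem hm hn) (le_of_mem hn hm)

theorem abs_mul_sub_le_mul_max {R : Type*} [Ring R] [LinearOrder R] [IsOrderedRing R] (a b c : R) :
    |a * b - c| ≤ (1 + |a|) * max |b| |c| := calc
  |a * b - c| ≤ |a| * |b| + |c| := by rw [← abs_mul]; exact abs_sub _ _
  _ ≤ |a| * max |b| |c| + max |b| |c| := by gcongr <;> simp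
  _ = (1 + |a|) * max |b| |c| := by rw [one_add_mul, add_comm]

section Rounding

variable {K : Type*} [Field K] [LinearOrder K] [IsStrictOrderedRing K] {θ y δ ε : K}

theorem abs_sub_mul_lt_half {a b : K} (ha : y = a + δ) (hb : θ * y = b + ε)
    (hsmall : max |δ| |ε| < 1 / (2 * (1 + |θ|))) : |b - θ * a| < 1 / 2 := calc
  |b - θ * a| = |θ * δ - ε| := by congr 1; linear_combination θ * ha - hb
  _ ≤ (1 + |θ|) * max |δ| |ε| := abs_mul_sub_le_mul_max θ δ ε
  _ < (1 + |θ|) * (1 / (2 * (1 + |θ|))) := by gcongr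
  _ = 1 / 2 := by field_simp

theorem stmt8_general {m n : ℤ} (hm : y = m + δ) (hn : θ * y = n + ε)
    (hsmall : max |δ| |ε| < 1 / (2 * (1 + |θ|))) :
    |(n : K) - θ * m| < 1 / 2 ∧
    (n : K) ∈ Set.Ioo (θ * m - 1 / 2) (θ * m + 1 / 2) ∧
    ∀ z : ℤ, (z : K) ∈ Set.Ioo (θ * m - 1 / 2) (θ * m + 1 / 2) → z = n := by
  have hlt : |(n : K) - θ * m| < 1 / 2 := abs_sub_mul_lt_half hm hn hsmall
  have hmem : (n : K) ∈ Set.Ioo (θ * m - 1 / 2) (θ * m + 1 / 2) := by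
    rwa [Set.mem_Ioo, sub_lt_comm, ← sub_lt_iff_lt_add', and_comm, ← abs_sub_lt_iff]
  have hlength : θ * m + 1 / 2 ≤ θ * m - 1 / 2 + 1 := by linarith
  exact ⟨hlt, hmem, fun z hz ↦ subsingleton_intCast_preimage_Ioo hlength hz hmem⟩

end Rounding

/-- writing `c₀ θ^k x = r k + e k` with `r k ∈ ℤ` and `e k ∈ (-1/2, 1/2]`,
if `max {|e k|, |e (k+1)|} < 1/(2(1+θ))`, then `|r (k+1) - θ * r k| < 1/2`; in particular
`r (k+1)` is the unique integer in the open interval `(θ * r k - 1/2, θ * r k + 1/2)`. -/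
theorem stmt8
    (c₀ : ℝ) (hc₀ : 0 < c₀) (θ : ℝ) (hθ : 1 < θ) (x : ℝ)
    (r : ℕ → ℤ) (e : ℕ → ℝ)
    (hre : ∀ k : ℕ, c₀ * θ ^ k * x = r k + e k ∧ e k ∈ Set.Ioc (-(1 / 2) : ℝ) (1 / 2))
    (k : ℕ) (hsmall : max |e k| |e (k + 1)| < 1 / (2 * (1 + θ))) :
    |(r (k + 1) : ℝ) - θ * r k| < 1 / 2 ∧
    ((r (k + 1) : ℝ)) ∈ Set.Ioo (θ * r k - 1 / 2) (θ * r k + 1 / 2) ∧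
    ∀ z : ℤ, (z : ℝ) ∈ Set.Ioo (θ * r k - 1 / 2) (θ * r k + 1 / 2) → z = r (k + 1) := by
  exact stmt8_general (hre k).1 (by rw [← (hre (k + 1)).1]; ring)
    (by rwa [abs_of_pos (zero_lt_one.trans hθ)])
end
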